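/- Let 𝒴 be a Polish space, 𝒳 a Polish space, r ∈ [1,∞), and let C : 𝒳 × 𝒫_r(𝒴) → ℝ ∪ {+∞} be measurable with C(x,p) ≥ −K(1 + d_𝒳(x,x₀)^r + 𝒲_r(p,δ_{y₀})^r) for some constant K and (x₀,y₀). Define C̃(x,p) := inf{ ∫ C(x,q) Q(dq) : Q ∈ 𝒫_r(𝒫_r(𝒴)), I(Q) = p }, and let C**_x denote the lower semicontinuous convex envelope of p ↦ C(x,p). Then for all (x,p) ∈ 𝒳 × 𝒫_r(𝒴) and all Q ∈ 𝒫_r(𝒫_r(𝒴)) with I(Q) = p: C**_x(p) ≤ C̃(x,p) ≤ ∫ C̃(x,q) Q(dq). Moreover, if C(x,·) is lower semicontinuous then C**_x(p) = C̃(x,p) for all p ∈ 𝒫_r(𝒴). -/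

import Mathlib

open MeasureTheory Set Filter
open scoped ENNReal NNReal Topology RealInnerProductSpace

noncomputable section

namespace WOT

/-- The set of couplings of `μ` and `ν`. -/
def Couplings {X Y : Type*} [MeasurableSpace X] [MeasurableSpace Y]
    (μ : Measure X) (ν : Measure Y) : Set (Measure (X × Y)) :=
  {π | π.map Prod.fst = μ ∧ π.map Prod.snd = ν}

/-- `K` is a disintegration of `π` with respect to its first marginal `μ`. -/
def IsDisint {X Y : Type*} [MeasurableSpace X] [MeasurableSpace Y]
    (π : Measure (X × Y)) (μ : Measure X) (K : X → Measure Y) : Prop :=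
  Measurable K ∧ (∀ x, IsProbabilityMeasure (K x)) ∧
    ∀ s : Set (X × Y), MeasurableSet s → π s = ∫⁻ x, K x (Prod.mk x ⁻¹' s) ∂μ

/-- The intensity `I(Q)` of a measure on measures. -/
def intensity {Y : Type*} [MeasurableSpace Y] (Q : Measure (Measure Y)) : Measure Y :=
  Q.join

/-- The intensity map `Î`. -/
def intensityHat {X Y : Type*} [MeasurableSpace X] [MeasurableSpace Y]
    (P : Measure (X × Measure Y)) : Measure (X × Y) :=
  P.bind fun xp => (Measure.dirac xp.1).prod xp.2

/-- `Λ(μ,ν)`, the set of probability measures on `X × 𝒫(Y)` whose intensity is a coupling. -/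
def Lambda {X Y : Type*} [MeasurableSpace X] [MeasurableSpace Y]
    (μ : Measure X) (ν : Measure Y) : Set (Measure (X × Measure Y)) :=
  {P | IsProbabilityMeasure P ∧ (∀ᵐ xp ∂P, IsProbabilityMeasure xp.2) ∧
    intensityHat P ∈ Couplings μ ν}

/-- Finite `r`-th moment. -/
def FinMom {X : Type*} [MeasurableSpace X] [PseudoMetricSpace X]
    (r : ℝ) (x₀ : X) (μ : Measure X) : Prop :=
  ∫⁻ x, ENNReal.ofReal (dist x x₀ ^ r) ∂μ < ⊤

/-- The growth class `Φ_r`. -/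
def PhiR {X : Type*} [PseudoMetricSpace X] (r : ℝ) (x₀ : X) : Set (X → ℝ) :=
  {φ | Continuous φ ∧ ∃ K : ℝ, ∀ x, |φ x| ≤ K * (1 + dist x x₀ ^ r)}

/-- The `r`-Wasserstein distance (valued in `ℝ≥0∞`). -/
def Wr {Y : Type*} [MeasurableSpace Y] [PseudoMetricSpace Y]
    (r : ℝ) (p q : Measure Y) : ℝ≥0∞ :=
  ⨅ π ∈ Couplings p q, (∫⁻ z : Y × Y, ENNReal.ofReal (dist z.1 z.2 ^ r) ∂π) ^ (1 / r)

/-- `𝒫_r(Y)`: probability measures with finite `r`-th moment. -/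
def Pr {Y : Type*} [MeasurableSpace Y] [PseudoMetricSpace Y] (r : ℝ) (y₀ : Y) :
    Set (Measure Y) :=
  {p | IsProbabilityMeasure p ∧ FinMom r y₀ p}

/-- `𝒫_r(𝒫_r(Y))`: probability measures on `𝒫_r(Y)` with finite `r`-th moment w.r.t. `𝒲_r`. -/
def PrP {Y : Type*} [MeasurableSpace Y] [PseudoMetricSpace Y] (r : ℝ) (y₀ : Y) :
    Set (Measure (Measure Y)) :=
  {Q | IsProbabilityMeasure Q ∧ (∀ᵐ p ∂Q, p ∈ Pr r y₀) ∧
    ∫⁻ p, Wr r p (Measure.dirac y₀) ^ r ∂Q < ⊤}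

/-- The positive part of an extended real, valued in `ℝ≥0∞`. -/
def epos (e : EReal) : ℝ≥0∞ := if e = ⊤ then ⊤ else ENNReal.ofReal e.toReal

/-- Extended-real integral: positive part minus negative part (with value `⊥` when
both parts are infinite, i.e. when the integral is not well-defined). -/
def eInt {X : Type*} [MeasurableSpace X] (f : X → EReal) (μ : Measure X) : EReal :=
  ((∫⁻ x, epos (f x) ∂μ : ℝ≥0∞) : EReal) - ((∫⁻ x, epos (-(f x)) ∂μ : ℝ≥0∞) : EReal)

/-- Extended-real integral with the opposite (`⊤`) convention for ill-defined integrals. -/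
def eIntU {X : Type*} [MeasurableSpace X] (f : X → EReal) (μ : Measure X) : EReal :=
  -eInt (fun x => -(f x)) μ

/-- The extended-real integral is well-defined. -/
def eIntWellDef {X : Type*} [MeasurableSpace X] (f : X → EReal) (μ : Measure X) : Prop :=
  (∫⁻ x, epos (f x) ∂μ ≠ ⊤) ∨ (∫⁻ x, epos (-(f x)) ∂μ ≠ ⊤)

/-- Convergence in the `r`-Wasserstein distance. -/
def WrTendsto {Y : Type*} [MeasurableSpace Y] [PseudoMetricSpace Y]
    (r : ℝ) (ps : ℕ → Measure Y) (p : Measure Y) : Prop :=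
  Tendsto (fun n => Wr r (ps n) p) atTop (nhds 0)

/-- (Sequential) lower semicontinuity on `𝒫_r(Y)` w.r.t. `𝒲_r`. -/
def LscWr1 {Y : Type*} [MeasurableSpace Y] [PseudoMetricSpace Y]
    (r : ℝ) (y₀ : Y) (G : Measure Y → EReal) : Prop :=
  ∀ (p : Measure Y) (ps : ℕ → Measure Y), p ∈ Pr r y₀ → (∀ n, ps n ∈ Pr r y₀) →
    WrTendsto r ps p → G p ≤ liminf (fun n => G (ps n)) atTop

/-- (Sequential) upper semicontinuity on `𝒫_r(Y)` w.r.t. `𝒲_r`. -/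
def UscWr1 {Y : Type*} [MeasurableSpace Y] [PseudoMetricSpace Y]
    (r : ℝ) (y₀ : Y) (G : Measure Y → EReal) : Prop :=
  ∀ (p : Measure Y) (ps : ℕ → Measure Y), p ∈ Pr r y₀ → (∀ n, ps n ∈ Pr r y₀) →
    WrTendsto r ps p → limsup (fun n => G (ps n)) atTop ≤ G p

/-- (Sequential) lower semicontinuity on `X × 𝒫_r(Y)` w.r.t. `d_X × 𝒲_r`. -/
def LscWr {X Y : Type*} [TopologicalSpace X] [MeasurableSpace Y] [PseudoMetricSpace Y]
    (r : ℝ) (y₀ : Y) (C : X × Measure Y → EReal) : Prop :=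
  ∀ (x : X) (xs : ℕ → X) (p : Measure Y) (ps : ℕ → Measure Y),
    p ∈ Pr r y₀ → (∀ n, ps n ∈ Pr r y₀) → Tendsto xs atTop (nhds x) → WrTendsto r ps p →
    C (x, p) ≤ liminf (fun n => C (xs n, ps n)) atTop

/-- (Sequential) continuity of a real-valued cost on `X × 𝒫_r(Y)` w.r.t. `d_X × 𝒲_r`. -/
def ContWr {X Y : Type*} [TopologicalSpace X] [MeasurableSpace Y] [PseudoMetricSpace Y]
    (r : ℝ) (y₀ : Y) (C : X × Measure Y → ℝ) : Prop :=
  ∀ (x : X) (xs : ℕ → X) (p : Measure Y) (ps : ℕ → Measure Y),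
    p ∈ Pr r y₀ → (∀ n, ps n ∈ Pr r y₀) → Tendsto xs atTop (nhds x) → WrTendsto r ps p →
    Tendsto (fun n => C (xs n, ps n)) atTop (nhds (C (x, p)))

/-- Convexity of an extended-real-valued function on a set of measures. -/
def EConvexOn {Y : Type*} [MeasurableSpace Y] (S : Set (Measure Y)) (G : Measure Y → EReal) :
    Prop :=
  ∀ p ∈ S, ∀ q ∈ S, ∀ t : ℝ≥0, t ≤ 1 →
    G ((t : ℝ≥0∞) • p + ((1 - t : ℝ≥0) : ℝ≥0∞) • q)
      ≤ ((t : ℝ) : EReal) * G p + (((1 - t : ℝ≥0) : ℝ) : EReal) * G q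

/-- The lower semicontinuous convex envelope (on `𝒫_r(Y)` w.r.t. `𝒲_r`). -/
def cvxEnvWr {Y : Type*} [MeasurableSpace Y] [PseudoMetricSpace Y]
    (r : ℝ) (y₀ : Y) (f : Measure Y → EReal) : Measure Y → EReal :=
  fun p => ⨆ G ∈ {G : Measure Y → EReal |
    LscWr1 r y₀ G ∧ EConvexOn (Pr r y₀) G ∧ ∀ q ∈ Pr r y₀, G q ≤ f q}, G p

/-- The cost `C̃(x,p) = inf {∫ C(x,q) Q(dq) : Q ∈ 𝒫_r(𝒫_r(Y)), I(Q) = p}`. -/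
def tildeC {X Y : Type*} [MeasurableSpace X] [MeasurableSpace Y] [PseudoMetricSpace Y]
    (r : ℝ) (y₀ : Y) (C : X × Measure Y → EReal) : X × Measure Y → EReal :=
  fun xp => ⨅ Q ∈ {Q | Q ∈ PrP r y₀ ∧ intensity Q = xp.2}, eInt (fun q => C (xp.1, q)) Q

/-- The barycenter of a measure on a normed space. -/
def bary {E : Type*} [NormedAddCommGroup E] [NormedSpace ℝ E] [MeasurableSpace E]
    (p : Measure E) : E :=
  ∫ y, y ∂p

/-- Convex order of measures. -/
def ConvexOrder {E : Type*} [NormedAddCommGroup E] [NormedSpace ℝ E] [MeasurableSpace E]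
    (ν' ν : Measure E) : Prop :=
  ∀ θ : E → ℝ, ConvexOn ℝ Set.univ θ →
    eInt (fun y => ((θ y : ℝ) : EReal)) ν' ≤ eInt (fun y => ((θ y : ℝ) : EReal)) ν

/-- The inf-convolution `R_C ψ`. -/
def RC {X Y : Type*} [MeasurableSpace Y] [PseudoMetricSpace Y]
    (r : ℝ) (y₀ : Y) (C : X × Measure Y → EReal) (ψ : Y → ℝ) : X → EReal :=
  fun x => ⨅ p ∈ Pr r y₀, (((-∫ y, ψ y ∂p : ℝ) : EReal) + C (x, p))

/-- `κ` is a regular conditional distribution of `Yv` given the sub-σ-algebra `m1`. -/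
def IsRCD {Ω Y : Type*} [MeasurableSpace Y] (m1 : MeasurableSpace Ω)
    (mΩ : MeasurableSpace Ω) (P : @Measure Ω mΩ) (Yv : Ω → Y) (κ : Ω → Measure Y) : Prop :=
  (∀ ω, IsProbabilityMeasure (κ ω)) ∧ Measurable[m1] κ ∧
    ∀ A : Set Y, MeasurableSet A → ∀ B : Set Ω, MeasurableSet[m1] B →
      P (B ∩ Yv ⁻¹' A) = ∫⁻ ω in B, κ ω A ∂P

end WOT

open WOT

/-!
All costs are made nonnegative by adding a multiple of the function `1 + ∫ d(y, y₀)^r p(dy)`, which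
is affine in `p` and continuous for `𝒲_r`.

`C** ≤ C̃` is Jensen's inequality for a convex lower semicontinuous minorant `G` of the cost. If
`q₁, q₂, …` are drawn independently from `Q`, then almost surely their running means converge to
`I(Q)` in `𝒲_r`, and `G` of these means is at most the running mean of the costs, which converges
to `∫ C(x, q) Q(dq)` by the strong law of large numbers.

`C̃(x, I(Q)) ≤ ∫ C̃(x, q) Q(dq)` follows by choosing measurably in `q` an almost optimal competitor
for `C̃(x, q)` and averaging the competitors over `Q`.

For the equality, `C̃(x, ·)` is convex and at most `C(x, ·)`, so only its lower semicontinuity has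
to be shown. Reweighting by `1 + d(y, y₀)^r` turns `𝒲_r`-convergence into weak convergence; the
competitors for a convergent sequence of measures are then tight because their intensities are, and
a weak limit of them is a competitor for the limit measure.
-/

namespace WOT

/-! ### Measurable selection -/

section Selection

variable {S Z : Type*}

theorem exists_measurable_section_of_isCompact_real [TopologicalSpace S] [T2Space S]
    [MeasurableSpace S] [OpensMeasurableSpace S] {K : Set ℝ} (hK : IsCompact K) {f : K → S}
    (hf : Continuous f) : ∃ σ : range f → K, Measurable σ ∧ ∀ s, f (σ s) = s := by
  have : CompactSpace K := isCompact_iff_compactSpace.mp hK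
  have exists_min (s : range f) : ∃ z : K, f z = s ∧ ∀ z', f z' = s → z ≤ z' := by
    obtain ⟨_, z₀, rfl⟩ := s
    obtain ⟨z, hz, hmin⟩ := (isClosed_singleton.preimage hf).isCompact.exists_isMinOn
      ⟨z₀, rfl⟩ continuous_subtype_val.continuousOn
    exact ⟨z, hz, fun z' hz' ↦ hmin hz'⟩
  choose σ hσ hmin using exists_min
  refine ⟨σ, ?_, hσ⟩
  refine (MeasurableEmbedding.subtype_coe hK.measurableSet).measurable_comp_iff.mp
    (measurable_of_Iic fun a ↦ ?_)
  have sublevel : (Subtype.val ∘ σ) ⁻¹' Iic a = Subtype.val ⁻¹' (f '' (Subtype.val ⁻¹' Iic a)) := by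
    ext s
    exact ⟨fun h ↦ ⟨σ s, h, hσ s⟩, fun ⟨z, hz, hzs⟩ ↦
      mem_Iic.mpr ((Subtype.coe_le_coe.mpr (hmin s z hzs)).trans hz)⟩
  rw [sublevel]
  exact measurable_subtype_coe
    ((isClosed_Iic.preimage continuous_subtype_val).isCompact.image hf).isClosed.measurableSet

theorem exists_measurable_section_of_compactSpace [TopologicalSpace S] [T2Space S]
    [MeasurableSpace S] [OpensMeasurableSpace S] [TopologicalSpace Z] [CompactSpace Z]
    [TopologicalSpace.MetrizableSpace Z] [Nonempty Z] [MeasurableSpace Z] [BorelSpace Z]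
    {f : Z → S} (hf : Continuous f) :
    ∃ σ : S → Z, Measurable σ ∧ ∀ s ∈ range f, f (σ s) = s := by
  let := TopologicalSpace.metrizableSpaceMetric Z
  obtain ⟨g, hg, hg_surj⟩ := exists_nat_bool_continuous_surjective_of_compact Z
  have hφ := hg.comp cantorSetHomeomorphNatToBool.continuous
  obtain ⟨τ, hτ, hfτ⟩ := exists_measurable_section_of_isCompact_real isCompact_cantorSet
    (hf.comp hφ)
  have hrange : range (f ∘ g ∘ cantorSetHomeomorphNatToBool) = range f := by
    rw [range_comp, (hg_surj.comp cantorSetHomeomorphNatToBool.surjective).range_eq, image_univ]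
  have hmeas : MeasurableSet (range (f ∘ g ∘ cantorSetHomeomorphNatToBool)) := by
    rw [hrange]; exact (isCompact_range hf).isClosed.measurableSet
  obtain ⟨σ, hσ, hσ_eq⟩ := (MeasurableEmbedding.subtype_coe hmeas).exists_measurable_extend
    (hφ.measurable.comp hτ) fun _ ↦ ‹_›
  refine ⟨σ, hσ, fun s hs ↦ ?_⟩
  rw [← hrange] at hs
  exact (congrArg f (congrFun hσ_eq ⟨s, hs⟩)).trans (hfτ ⟨s, hs⟩)

/-- The set of sequences whose first `n` terms are bounded by those of `k`. -/
def boundedBefore (k : ℕ → ℕ) (n : ℕ) : Set (ℕ → ℕ) := {σ | ∀ i < n, σ i ≤ k i}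

theorem boundedBefore_succ (k : ℕ → ℕ) (n : ℕ) :
    boundedBefore k (n + 1) = boundedBefore k n ∩ {σ | σ n ≤ k n} := by
  ext σ
  simp only [boundedBefore, Nat.lt_succ_iff_lt_or_eq, mem_inter_iff, mem_ofPred_eq]
  grind

theorem exists_lt_measure_image_inter_le [MeasurableSpace S] {μ : Measure S} {f : (ℕ → ℕ) → S}
    {A : Set (ℕ → ℕ)} {c : ℝ≥0∞} (n : ℕ) (hc : c < μ (f '' A)) :
    ∃ j, c < μ (f '' (A ∩ {σ | σ n ≤ j})) := by
  have hA : f '' A = ⋃ j : ℕ, f '' (A ∩ {σ | σ n ≤ j}) := by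
    rw [← image_iUnion, ← inter_iUnion, iUnion_eq_univ_iff.mpr fun σ ↦ ⟨σ n, le_refl (σ n)⟩,
      inter_univ]
  have hmono : Monotone fun j : ℕ ↦ f '' (A ∩ {σ | σ n ≤ j}) := fun i j hij ↦
    image_mono (inter_subset_inter_right _ fun σ (h : σ n ≤ i) ↦ h.trans hij)
  rwa [hA, hmono.measure_iUnion, lt_iSup_iff] at hc

theorem exists_forall_lt_measure_image_boundedBefore [MeasurableSpace S] {μ : Measure S}
    {f : (ℕ → ℕ) → S} {c : ℝ≥0∞} (hc : c < μ (range f)) :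
    ∃ k : ℕ → ℕ, ∀ n, c < μ (f '' boundedBefore k n) := by
  choose! j hj using fun A n ↦ exists_lt_measure_image_inter_le (μ := μ) (f := f) (A := A)
    (c := c) n
  let B : ℕ → Set (ℕ → ℕ) := Nat.rec univ fun n A ↦ A ∩ {σ | σ n ≤ j A n}
  have hB (n : ℕ) : c < μ (f '' B n) := by
    induction n with
    | zero => simpa [B] using hc
    | succ n ih => exact hj _ _ ih
  refine ⟨fun n ↦ j (B n) n, fun n ↦ ?_⟩
  suffices h : boundedBefore (fun n ↦ j (B n) n) n = B n by rw [h]; exact hB n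
  induction n with
  | zero => simp [boundedBefore, B]
  | succ n ih => rw [boundedBefore_succ, ih]

theorem isCompact_Iic_natSeq (k : ℕ → ℕ) : IsCompact (Iic k) :=
  Icc_bot (a := k) ▸ isCompact_Icc

theorem exists_boundedBefore_subset {k : ℕ → ℕ} {U : Set (ℕ → ℕ)} (hU : IsOpen U)
    (hkU : Iic k ⊆ U) : ∃ n, boundedBefore k n ⊆ U := by
  let := PiNat.metricSpaceNatNat
  obtain ⟨δ, hδ, hthick⟩ := (isCompact_Iic_natSeq k).exists_thickening_subset_open hU hkU
  obtain ⟨n, hn⟩ := exists_pow_lt_of_lt_one hδ one_half_lt_one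
  refine ⟨n, fun σ hσ ↦ hthick (Metric.mem_thickening_iff.mpr
    ⟨σ ⊓ k, mem_Iic.mpr inf_le_right, ?_⟩)⟩
  refine lt_of_le_of_lt ?_ hn
  rw [← PiNat.mem_cylinder_iff_dist_le, PiNat.mem_cylinder_iff]
  exact fun i hi ↦ (min_eq_left (hσ i hi)).symm

theorem iInter_closure_image_boundedBefore_subset [TopologicalSpace S] [T2Space S]
    {f : (ℕ → ℕ) → S} (hf : Continuous f) (k : ℕ → ℕ) :
    ⋂ n, closure (f '' boundedBefore k n) ⊆ f '' Iic k := by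
  intro s hs
  by_contra hsK
  obtain ⟨U, V, hU, hV, hKU, hsV, hUV⟩ :=
    ((isCompact_Iic_natSeq k).image hf).separation_of_notMem hsK
  obtain ⟨n, hn⟩ := exists_boundedBefore_subset (hU.preimage hf) (image_subset_iff.mp hKU)
  obtain ⟨x, hxV, hx⟩ := mem_closure_iff.mp (mem_iInter.mp hs n) V hV hsV
  exact hUV.ne_of_mem (image_subset_iff.mpr hn hx) hxV rfl

/-- Capacitability of analytic sets. -/
theorem exists_isCompact_le_measure_image [TopologicalSpace S] [T2Space S] [MeasurableSpace S]
    [OpensMeasurableSpace S] {μ : Measure S} [IsFiniteMeasure μ] {f : (ℕ → ℕ) → S}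
    (hf : Continuous f) {c : ℝ≥0∞} (hc : c < μ (range f)) :
    ∃ K, IsCompact K ∧ K.Nonempty ∧ c ≤ μ (f '' K) := by
  obtain ⟨k, hk⟩ := exists_forall_lt_measure_image_boundedBefore hc
  have hanti : Antitone fun n ↦ closure (f '' boundedBefore k n) := fun m n hmn ↦
    closure_mono (image_mono fun σ hσ i hi ↦ hσ i (hi.trans_le hmn))
  refine ⟨Iic k, isCompact_Iic_natSeq k, nonempty_Iic, ?_⟩
  calc c ≤ ⨅ n, μ (closure (f '' boundedBefore k n)) :=
        le_iInf fun n ↦ (hk n).le.trans (measure_mono subset_closure)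
    _ = μ (⋂ n, closure (f '' boundedBefore k n)) :=
        (hanti.measure_iInter (fun n ↦ isClosed_closure.nullMeasurableSet)
          ⟨0, measure_ne_top _ _⟩).symm
    _ ≤ μ (f '' Iic k) := measure_mono (iInter_closure_image_boundedBefore_subset hf k)

theorem exists_measurable_section_le_measure [TopologicalSpace S] [T2Space S] [MeasurableSpace S]
    [OpensMeasurableSpace S] {μ : Measure S} [IsFiniteMeasure μ] {f : (ℕ → ℕ) → S}
    (hf : Continuous f) {c : ℝ≥0∞} (hc : c < μ (range f)) :
    ∃ A ⊆ range f, MeasurableSet A ∧ c ≤ μ A ∧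
      ∃ σ : S → ℕ → ℕ, Measurable σ ∧ ∀ s ∈ A, f (σ s) = s := by
  obtain ⟨K, hK, hK_ne, hcK⟩ := exists_isCompact_le_measure_image hf hc
  have : CompactSpace K := isCompact_iff_compactSpace.mp hK
  have : Nonempty K := hK_ne.to_subtype
  obtain ⟨σ, hσ, hfσ⟩ :=
    exists_measurable_section_of_compactSpace (hf.comp (continuous_subtype_val (p := (· ∈ K))))
  rw [range_comp, Subtype.range_coe] at hfσ
  exact ⟨f '' K, image_subset_range f K, (hK.image hf).isClosed.measurableSet, hcK,
    fun s ↦ σ s, measurable_subtype_coe.comp hσ, hfσ⟩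

theorem exists_measurable_piecewise_of_iUnion [MeasurableSpace S] [MeasurableSpace Z]
    {A : ℕ → Set S} (hA : ∀ n, MeasurableSet (A n)) {σ : ℕ → S → Z} (hσ : ∀ n, Measurable (σ n)) :
    ∃ τ : S → Z, Measurable τ ∧ ∀ s ∈ ⋃ n, A n, ∃ n, s ∈ A n ∧ τ s = σ n s := by
  obtain ⟨τ, hτ, hτσ⟩ := exists_measurable_piecewise (disjointed A) (.disjointed hA) σ hσ
    fun m n hmn ↦ by simp [(disjoint_disjointed A hmn).inter_eq]
  refine ⟨τ, hτ, fun s hs ↦ ?_⟩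
  rw [← iUnion_disjointed, mem_iUnion] at hs
  obtain ⟨n, hn⟩ := hs
  exact ⟨n, disjointed_subset A n hn, hτσ n hn⟩

theorem exists_measurable_ae_section [TopologicalSpace S] [T2Space S] [MeasurableSpace S]
    [OpensMeasurableSpace S] {μ : Measure S} [IsFiniteMeasure μ] {f : (ℕ → ℕ) → S}
    (hf : Continuous f) :
    ∃ σ : S → ℕ → ℕ, Measurable σ ∧ ∀ᵐ s ∂μ, s ∈ range f → f (σ s) = s := by
  rcases eq_or_ne (μ (range f)) 0 with h0 | h0
  · refine ⟨fun _ ↦ 0, measurable_const, ?_⟩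
    filter_upwards [measure_eq_zero_iff_ae_notMem.mp h0] with s hs hs'
    exact absurd hs' hs
  obtain ⟨c, -, hc, hc_lim⟩ := exists_seq_strictMono_tendsto' (pos_iff_ne_zero.mpr h0)
  choose A hA_sub hA hcA σ hσ hfσ using fun n ↦
    exists_measurable_section_le_measure hf (hc n).2
  obtain ⟨τ, hτ, hτσ⟩ := exists_measurable_piecewise_of_iUnion hA hσ
  have hnull : μ (range f \ ⋃ n, A n) = 0 := by
    rw [measure_sdiff (iUnion_subset hA_sub) (MeasurableSet.iUnion hA).nullMeasurableSet
      (measure_ne_top _ _), tsub_eq_zero_iff_le]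
    exact le_of_tendsto' hc_lim fun n ↦ (hcA n).trans (measure_mono (subset_iUnion A n))
  refine ⟨τ, hτ, ?_⟩
  filter_upwards [measure_eq_zero_iff_ae_notMem.mp hnull] with s hs hsf
  obtain ⟨n, hn, hτn⟩ := hτσ s (by_contra fun h ↦ hs ⟨hsf, h⟩)
  rw [hτn, hfσ n s hn]

variable [MeasurableSpace S] [StandardBorelSpace S] [MeasurableSpace Z] [StandardBorelSpace Z]
  [Nonempty Z]

/-- The Jankov–von Neumann selection theorem. -/
theorem exists_measurable_ae_selection (μ : Measure S) [IsFiniteMeasure μ] {B : Set (S × Z)}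
    (hB : MeasurableSet B) :
    ∃ σ : S → Z, Measurable σ ∧ ∀ᵐ s ∂μ, (∃ z, (s, z) ∈ B) → (s, σ s) ∈ B := by
  let := upgradeStandardBorel S
  let := upgradeStandardBorel Z
  have hB_analytic := hB.analyticSet
  rw [AnalyticSet] at hB_analytic
  rcases hB_analytic with rfl | ⟨g, hg, rfl⟩
  · exact ⟨fun _ ↦ Classical.arbitrary Z, measurable_const, by simp⟩
  obtain ⟨σ, hσ, hgσ⟩ := exists_measurable_ae_section (μ := μ) (continuous_fst.comp hg)
  refine ⟨fun s ↦ (g (σ s)).2, measurable_snd.comp (hg.measurable.comp hσ), ?_⟩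
  filter_upwards [hgσ] with s hs
  rintro ⟨z, x, hx⟩
  exact ⟨σ s, Prod.ext (hs ⟨x, congrArg Prod.fst hx⟩) rfl⟩

theorem aemeasurable_iInf_of_standardBorel (μ : Measure S) [IsFiniteMeasure μ]
    {F : S × Z → ℝ≥0∞} (hF : Measurable F) : AEMeasurable (fun s ↦ ⨅ z, F (s, z)) μ := by
  refine NullMeasurable.aemeasurable (measurable_of_Iio (δ := NullMeasurableSpace S μ) fun a ↦ ?_)
  obtain ⟨σ, hσ, h⟩ := exists_measurable_ae_selection μ (hF measurableSet_Iio : MeasurableSet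
    (F ⁻¹' Iio a))
  have hm : MeasurableSet {s | F (s, σ s) < a} :=
    hF.comp (measurable_id.prodMk hσ) measurableSet_Iio
  refine hm.nullMeasurableSet.congr ?_
  filter_upwards [h] with s hs
  change (F (s, σ s) < a) = (⨅ z, F (s, z) < a)
  exact propext ⟨(iInf_le (fun z ↦ F (s, z)) (σ s)).trans_lt, fun h' ↦ hs (iInf_lt_iff.mp h')⟩

theorem exists_measurable_ae_le_iInf_add (μ : Measure S) [IsFiniteMeasure μ] {F : S × Z → ℝ≥0∞}
    (hF : Measurable F) {ε : ℝ≥0∞} (hε : ε ≠ 0) :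
    ∃ σ : S → Z, Measurable σ ∧ ∀ᵐ s ∂μ, F (s, σ s) ≤ (⨅ z, F (s, z)) + ε := by
  have hinf := aemeasurable_iInf_of_standardBorel μ hF
  obtain ⟨σ, hσ, h⟩ := exists_measurable_ae_selection μ (B := {x | F x ≤ hinf.mk _ x.1 + ε})
    (measurableSet_le hF ((hinf.measurable_mk.comp measurable_fst).add_const _))
  refine ⟨σ, hσ, ?_⟩
  filter_upwards [h, hinf.ae_eq_mk] with s hs hmk
  rw [hmk]
  apply hs
  rw [← hmk]
  rcases eq_or_ne (⨅ z, F (s, z)) ⊤ with htop | htop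
  · exact ⟨Classical.arbitrary Z, by simp [htop]⟩
  · exact (iInf_lt_iff.mp (ENNReal.lt_add_right htop hε)).imp fun _ ↦ le_of_lt

end Selection

/-! ### The space of probability measures -/

section ProbabilityMeasureSpace

open Topology TopologicalSpace

theorem measurable_toMeasure {T : Type*} [MeasurableSpace T] :
    Measurable fun p : ProbabilityMeasure T ↦ (p : Measure T) :=
  measurable_subtype_coe

theorem measurable_toMeasure_apply {T : Type*} [MeasurableSpace T] {A : Set T}
    (hA : MeasurableSet A) : Measurable fun p : ProbabilityMeasure T ↦ (p : Measure T) A :=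
  (Measure.measurable_coe hA).comp measurable_toMeasure

theorem measurable_probabilityMeasure_iff {S T : Type*} [MeasurableSpace S] [MeasurableSpace T]
    {f : S → ProbabilityMeasure T} :
    Measurable f ↔ ∀ A, MeasurableSet A → Measurable fun s ↦ (f s : Measure T) A :=
  ⟨fun h _ hA ↦ (measurable_toMeasure_apply hA).comp h,
    fun h ↦ (Measure.measurable_of_measurable_coe _ h).subtype_mk (h := fun s ↦ (f s).2)⟩

theorem measurable_lintegral_probabilityMeasure {T : Type*} [MeasurableSpace T] {f : T → ℝ≥0∞}
    (hf : Measurable f) :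
    Measurable fun p : ProbabilityMeasure T ↦ ∫⁻ t, f t ∂(p : Measure T) :=
  (Measure.measurable_lintegral hf).comp measurable_toMeasure

theorem isInducing_map {Y K : Type*} [TopologicalSpace Y] [MeasurableSpace Y] [BorelSpace Y]
    [TopologicalSpace K] [MeasurableSpace K] [BorelSpace K]
    [PseudoMetrizableSpace K] [SeparableSpace K] {e : Y → K} (he : IsInducing e) :
    IsInducing fun p : ProbabilityMeasure Y ↦ p.map he.continuous.measurable.aemeasurable := by
  set F : ProbabilityMeasure Y → ProbabilityMeasure K :=
    fun p ↦ p.map he.continuous.measurable.aemeasurable with hF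
  have hcont : Continuous F := ProbabilityMeasure.continuous_map he.continuous
  refine isInducing_iff_nhds.2 fun μ ↦ le_antisymm hcont.continuousAt.tendsto.le_comap ?_
  refine tendsto_of_forall_isOpen_le_liminf' (μs := id) (L := comap F (𝓝 (F μ))) fun G hG ↦ ?_
  obtain ⟨U, hU, rfl⟩ := he.isOpen_iff.1 hG
  let := pseudoMetrizableSpacePseudoMetric K
  have hle := ProbabilityMeasure.le_liminf_measure_open_of_tendsto
    (tendsto_comap : Tendsto F (comap F (𝓝 (F μ))) _) hU
  simpa only [hF, id, ProbabilityMeasure.map_apply' _ _ hU.measurableSet] using hle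

instance secondCountableTopology_probabilityMeasure {Y : Type*} [TopologicalSpace Y]
    [MetrizableSpace Y] [SeparableSpace Y] [MeasurableSpace Y] [BorelSpace Y] :
    SecondCountableTopology (ProbabilityMeasure Y) := by
  let := metrizableSpaceMetric Y
  obtain ⟨e, he⟩ := Metric.PiNatEmbed.exists_embedding_to_hilbert_cube (X := Y)
  let := metrizableSpaceMetric (ProbabilityMeasure (ℕ → unitInterval))
  exact (isInducing_map he.isInducing).secondCountableTopology

theorem isOpen_setOf_lt_measure {Y : Type*} [TopologicalSpace Y] [PseudoMetrizableSpace Y]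
    [MeasurableSpace Y] [OpensMeasurableSpace Y] {G : Set Y} (hG : IsOpen G) (c : ℝ≥0∞) :
    IsOpen {μ : ProbabilityMeasure Y | c < (μ : Measure Y) G} := by
  let := pseudoMetrizableSpacePseudoMetric Y
  exact isOpen_iff_mem_nhds.2 fun μ hμ ↦ eventually_lt_of_lt_liminf <| lt_of_lt_of_le hμ <|
    ProbabilityMeasure.le_liminf_measure_open_of_tendsto tendsto_id hG

theorem probabilityMeasure_topology_eq_generateFrom {Y : Type*} [TopologicalSpace Y]
    [MeasurableSpace Y] [OpensMeasurableSpace Y] :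
    (inferInstance : TopologicalSpace (ProbabilityMeasure Y)) =
      generateFrom {U | IsOpen U ∧ MeasurableSet U} := by
  refine le_antisymm (le_generateFrom fun U hU ↦ hU.1) ?_
  have hid : Continuous[generateFrom {U | IsOpen U ∧ MeasurableSet U}, _]
      fun p : ProbabilityMeasure Y ↦ p := by
    refine (@ProbabilityMeasure.continuous_iff_forall_continuous_lintegral _ _ _ _ _
      (generateFrom {U | IsOpen U ∧ MeasurableSet U}) _).2 fun f ↦ ?_
    refine continuous_def.2 fun V hV ↦ isOpen_generateFrom_of_mem ⟨?_, ?_⟩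
    · exact hV.preimage
        (ProbabilityMeasure.continuous_iff_forall_continuous_lintegral.1 continuous_id f)
    · exact measurable_lintegral_probabilityMeasure f.continuous.measurable.coe_nnreal_ennreal
        hV.measurableSet
  exact continuous_id_iff_le.1 hid

instance borelSpace_probabilityMeasure {Y : Type*} [TopologicalSpace Y]
    [MetrizableSpace Y] [SeparableSpace Y] [MeasurableSpace Y] [BorelSpace Y] :
    BorelSpace (ProbabilityMeasure Y) := by
  refine ⟨le_antisymm ?_ ?_⟩
  · let : MeasurableSpace (ProbabilityMeasure Y) := borel _
    have : BorelSpace (ProbabilityMeasure Y) := ⟨rfl⟩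
    have hcoe : Measurable fun p : ProbabilityMeasure Y ↦ (p : Measure Y) :=
      Measurable.measure_of_isPiSystem_of_isProbabilityMeasure
        BorelSpace.measurable_eq isPiSystem_isOpen fun G hG ↦
          measurable_of_Ioi fun c ↦ (isOpen_setOf_lt_measure hG c).measurableSet
    exact hcoe.comap_le
  · rw [borel_eq_generateFrom_of_subbasis probabilityMeasure_topology_eq_generateFrom]
    exact MeasurableSpace.generateFrom_le fun U hU ↦ hU.2

theorem standardBorelSpace_of_measurableEmbedding {α β : Type*} [MeasurableSpace α]
    [MeasurableSpace β] [StandardBorelSpace β] {f : α → β} (hf : MeasurableEmbedding f) :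
    StandardBorelSpace α := by
  obtain ⟨t, ht, hpolish⟩ := hf.measurableSet_range.standardBorel.polish
  let e := hf.equivRange
  refine ⟨t.induced e, @BorelSpace.mk _ (t.induced e) _ ?_, e.toEquiv.polishSpace_induced⟩
  rw [borel_comap, ← ht.measurable_eq, e.measurableEmbedding.comap_eq]

theorem range_probabilityMeasure_map {S T : Type*} [MeasurableSpace S] [MeasurableSpace T]
    {e : S → T} (he : MeasurableEmbedding e) :
    range (fun p : ProbabilityMeasure S ↦ p.map he.measurable.aemeasurable) =
      {ν : ProbabilityMeasure T | (ν : Measure T) (range e)ᶜ = 0} := by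
  refine Subset.antisymm ?_ fun ν hν ↦ ?_
  · rintro _ ⟨p, rfl⟩
    rw [mem_ofPred_eq, ProbabilityMeasure.map_apply' _ _ he.measurableSet_range.compl]
    simp
  · have hrestrict : (ν : Measure T).restrict (range e) = ν :=
      Measure.restrict_eq_self_of_ae_mem (mem_ae_iff.2 hν)
    have hprob : IsProbabilityMeasure ((ν : Measure T).comap e) := by
      refine ⟨?_⟩
      rw [he.comap_apply, image_univ, (prob_compl_eq_zero_iff he.measurableSet_range).1 hν]
    exact ⟨⟨(ν : Measure T).comap e, hprob⟩, Subtype.ext ((he.map_comap _).trans hrestrict)⟩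

theorem measurableEmbedding_probabilityMeasure_map {S T : Type*} [MeasurableSpace S]
    [MeasurableSpace T] {e : S → T} (he : MeasurableEmbedding e) :
    MeasurableEmbedding fun p : ProbabilityMeasure S ↦ p.map he.measurable.aemeasurable := by
  set F : ProbabilityMeasure S → ProbabilityMeasure T :=
    fun p ↦ p.map he.measurable.aemeasurable
  have hmap (p : ProbabilityMeasure S) {A : Set S} (hA : MeasurableSet A) :
      (F p : Measure T) (e '' A) = (p : Measure S) A := by
    rw [ProbabilityMeasure.map_apply' _ _ (he.measurableSet_image.2 hA),
      he.injective.preimage_image]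
  refine MeasurableEmbedding.iff_comap_eq.2 ⟨fun p q hpq ↦ ?_, le_antisymm ?_ ?_, ?_⟩
  · have hcoe : (p : Measure S) = q := Measure.ext fun A hA ↦ by
      rw [← hmap p hA, ← hmap q hA]
      exact congrArg (fun ν : ProbabilityMeasure T ↦ (ν : Measure T) (e '' A)) hpq
    exact Subtype.ext hcoe
  · refine Measurable.comap_le (measurable_probabilityMeasure_iff.2 fun A hA ↦ ?_)
    simpa only [F, ProbabilityMeasure.map_apply' _ _ hA] using
      measurable_toMeasure_apply (he.measurable hA)
  · have hid : @Measurable _ _ (MeasurableSpace.comap F inferInstance) _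
        fun p : ProbabilityMeasure S ↦ p := by
      refine (@measurable_probabilityMeasure_iff _ _ (MeasurableSpace.comap F _) _ _).2
        fun A hA ↦ ?_
      simpa only [Function.comp_def, hmap _ hA] using
        (measurable_toMeasure_apply (he.measurableSet_image.2 hA)).comp (comap_measurable F)
    exact fun B hB ↦ hid hB
  · rw [range_probabilityMeasure_map he]
    exact measurableSet_eq_fun (measurable_toMeasure_apply he.measurableSet_range.compl)
      measurable_const

instance standardBorelSpace_probabilityMeasure {T : Type*} [MeasurableSpace T]
    [StandardBorelSpace T] : StandardBorelSpace (ProbabilityMeasure T) := by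
  let := upgradeStandardBorel T
  let := metrizableSpaceMetric T
  let := metrizableSpaceMetric (ProbabilityMeasure (ℕ → unitInterval))
  obtain ⟨e, he⟩ := Metric.PiNatEmbed.exists_embedding_to_hilbert_cube (X := T)
  have : PolishSpace (ProbabilityMeasure (ℕ → unitInterval)) := inferInstance
  exact standardBorelSpace_of_measurableEmbedding <|
    measurableEmbedding_probabilityMeasure_map (he.continuous.measurableEmbedding he.injective)

end ProbabilityMeasureSpace

/-! ### Intensities -/

section Intensity

variable {T : Type*} [MeasurableSpace T]

theorem measurableSet_setOf_isProbabilityMeasure :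
    MeasurableSet {p : Measure T | IsProbabilityMeasure p} := by
  simp only [isProbabilityMeasure_iff]
  exact measurableSet_eq_fun (Measure.measurable_coe MeasurableSet.univ) measurable_const

theorem measurableEmbedding_toMeasure :
    MeasurableEmbedding (ProbabilityMeasure.toMeasure (Ω := T)) :=
  MeasurableEmbedding.subtype_coe measurableSet_setOf_isProbabilityMeasure

theorem exists_map_toMeasure_eq (Q : Measure (Measure T)) [IsProbabilityMeasure Q]
    (hQ : ∀ᵐ p ∂Q, IsProbabilityMeasure p) :
    ∃ P : ProbabilityMeasure (ProbabilityMeasure T),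
      (P : Measure (ProbabilityMeasure T)).map ProbabilityMeasure.toMeasure = Q := by
  have hmap : (Q.comap (ProbabilityMeasure.toMeasure (Ω := T))).map
      ProbabilityMeasure.toMeasure = Q := by
    rw [measurableEmbedding_toMeasure.map_comap]
    exact Measure.restrict_eq_self_of_ae_mem (hQ.mono fun p hp ↦ ⟨⟨p, hp⟩, rfl⟩)
  have hprob : IsProbabilityMeasure (Q.comap (ProbabilityMeasure.toMeasure (Ω := T))) := by
    refine ⟨?_⟩
    rw [← preimage_univ, ← Measure.map_apply measurable_toMeasure MeasurableSet.univ, hmap,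
      measure_univ]
  exact ⟨⟨_, hprob⟩, hmap⟩

/-- The intensity of a random probability measure, as a probability measure. -/
def probIntensity (Q : ProbabilityMeasure (ProbabilityMeasure T)) : ProbabilityMeasure T :=
  ⟨intensity ((Q : Measure (ProbabilityMeasure T)).map ProbabilityMeasure.toMeasure), by
    refine ⟨?_⟩
    rw [intensity, Measure.join_apply MeasurableSet.univ,
      measurableEmbedding_toMeasure.lintegral_map]
    simp⟩

theorem lintegral_probIntensity (Q : ProbabilityMeasure (ProbabilityMeasure T)) {f : T → ℝ≥0∞}
    (hf : Measurable f) :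
    ∫⁻ y, f y ∂(probIntensity Q : Measure T) =
      ∫⁻ p, ∫⁻ y, f y ∂(p : Measure T) ∂(Q : Measure (ProbabilityMeasure T)) := by
  change ∫⁻ y, f y ∂(Measure.join _) = _
  rw [Measure.lintegral_join hf.aemeasurable, measurableEmbedding_toMeasure.lintegral_map]

theorem probIntensity_apply (Q : ProbabilityMeasure (ProbabilityMeasure T)) {A : Set T}
    (hA : MeasurableSet A) :
    (probIntensity Q : Measure T) A =
      ∫⁻ p, (p : Measure T) A ∂(Q : Measure (ProbabilityMeasure T)) := by
  simpa only [lintegral_indicator_one hA] using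
    lintegral_probIntensity Q (measurable_one.indicator hA)

theorem measurable_probIntensity : Measurable (probIntensity (T := T)) := by
  refine measurable_probabilityMeasure_iff.2 fun A hA ↦ ?_
  simpa only [probIntensity_apply _ hA] using
    measurable_lintegral_probabilityMeasure (measurable_toMeasure_apply hA)

end Intensity

/-! ### Moments and the Wasserstein distance -/

section Wasserstein

theorem ofReal_dist_rpow {Y : Type*} [PseudoMetricSpace Y] {r : ℝ} (hr : 0 ≤ r) (y z : Y) :
    ENNReal.ofReal (dist y z ^ r) = edist y z ^ r := by
  rw [edist_dist, ENNReal.ofReal_rpow_of_nonneg dist_nonneg hr]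

/-- The `r`-th moment `∫ d(y, y₀)^r p(dy)`, written with `edist` so that it takes values in
`ℝ≥0∞`. -/
def rMoment {Y : Type*} [MeasurableSpace Y] [PseudoMetricSpace Y] (r : ℝ) (y₀ : Y)
    (p : Measure Y) : ℝ≥0∞ :=
  ∫⁻ y, edist y y₀ ^ r ∂p

theorem mem_Pr_iff {Y : Type*} [MeasurableSpace Y] [PseudoMetricSpace Y] {r : ℝ} (hr : 0 ≤ r)
    {y₀ : Y} {p : Measure Y} : p ∈ Pr r y₀ ↔ IsProbabilityMeasure p ∧ rMoment r y₀ p < ⊤ := by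
  simp only [Pr, FinMom, rMoment, ofReal_dist_rpow hr, mem_ofPred_eq]

variable {Y : Type*} [MeasurableSpace Y] [MetricSpace Y] [BorelSpace Y] {r : ℝ} {y₀ : Y}

theorem measurable_edist_rpow (r : ℝ) (y₀ : Y) : Measurable fun y ↦ edist y y₀ ^ r :=
  measurable_edist_left.pow_const r

theorem measurable_rMoment (r : ℝ) (y₀ : Y) : Measurable (rMoment (Y := Y) r y₀) :=
  Measure.measurable_lintegral (measurable_edist_rpow r y₀)

theorem rMoment_probIntensity (r : ℝ) (y₀ : Y)
    (Q : ProbabilityMeasure (ProbabilityMeasure Y)) :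
    rMoment r y₀ (probIntensity Q : Measure Y) =
      ∫⁻ p, rMoment r y₀ (p : Measure Y) ∂(Q : Measure (ProbabilityMeasure Y)) :=
  lintegral_probIntensity Q (measurable_edist_rpow r y₀)

theorem Wr_rpow_le {Y : Type*} [MeasurableSpace Y] [PseudoMetricSpace Y] {r : ℝ} (hr : 0 < r)
    {p q : Measure Y} {π : Measure (Y × Y)} (hπ : π ∈ Couplings p q) :
    Wr r p q ^ r ≤ ∫⁻ z, edist z.1 z.2 ^ r ∂π := by
  rw [← ENNReal.le_rpow_inv_iff hr, ← one_div]
  simpa only [Wr, ofReal_dist_rpow hr.le] using iInf₂_le (f := fun π (_ : π ∈ Couplings p q) ↦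
    (∫⁻ z : Y × Y, edist z.1 z.2 ^ r ∂π) ^ (1 / r)) π hπ

theorem lintegral_edist_rpow_of_coupling_dirac {p : Measure Y} {π : Measure (Y × Y)}
    (hπ : π ∈ Couplings p (Measure.dirac y₀)) :
    ∫⁻ z, edist z.1 z.2 ^ r ∂π = rMoment r y₀ p := by
  have hae : ∀ᵐ z ∂π, z.2 = y₀ := by
    refine ae_of_ae_map (p := fun y ↦ y = y₀) measurable_snd.aemeasurable ?_
    rw [hπ.2, ae_dirac_eq]
    exact eventually_pure.2 rfl
  rw [rMoment, ← hπ.1, lintegral_map (measurable_edist_rpow r y₀) measurable_fst]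
  exact lintegral_congr_ae (hae.mono fun z hz ↦ by simp only [hz])

theorem Wr_dirac_rpow (hr : 0 < r) (y₀ : Y) (p : Measure Y) [IsProbabilityMeasure p] :
    Wr r p (Measure.dirac y₀) ^ r = rMoment r y₀ p := by
  have hprod : p.prod (Measure.dirac y₀) ∈ Couplings p (Measure.dirac y₀) :=
    ⟨by rw [← Measure.fst, Measure.fst_prod], by rw [← Measure.snd, Measure.snd_prod]⟩
  have hWr : Wr r p (Measure.dirac y₀) = rMoment r y₀ p ^ (1 / r) := by
    simp only [Wr, ofReal_dist_rpow hr.le]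
    refine le_antisymm (iInf₂_le_of_le _ hprod ?_) (le_iInf₂ fun π hπ ↦ ?_)
    · rw [lintegral_edist_rpow_of_coupling_dirac hprod]
    · rw [lintegral_edist_rpow_of_coupling_dirac hπ]
  rw [hWr, ← ENNReal.rpow_mul, one_div_mul_cancel hr.ne', ENNReal.rpow_one]

theorem mem_PrP_iff (hr : 0 < r) {Q : Measure (Measure Y)} :
    Q ∈ PrP r y₀ ↔ IsProbabilityMeasure Q ∧ (∀ᵐ p ∂Q, IsProbabilityMeasure p) ∧
      rMoment r y₀ (intensity Q) < ⊤ := by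
  have hmoment : rMoment r y₀ (intensity Q) = ∫⁻ p, rMoment r y₀ p ∂Q :=
    Measure.lintegral_join (measurable_edist_rpow r y₀).aemeasurable
  have hWr (hP : ∀ᵐ p ∂Q, IsProbabilityMeasure p) :
      ∫⁻ p, Wr r p (Measure.dirac y₀) ^ r ∂Q = ∫⁻ p, rMoment r y₀ p ∂Q :=
    lintegral_congr_ae (hP.mono fun p hp ↦ Wr_dirac_rpow hr y₀ p)
  simp only [PrP, mem_Pr_iff hr.le, mem_ofPred_eq, hmoment]
  refine and_congr_right fun _ ↦ ⟨fun ⟨hP, hfin⟩ ↦ ?_, fun ⟨hP, hfin⟩ ↦ ?_⟩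
  · have hP' := hP.mono fun p hp ↦ hp.1
    exact ⟨hP', hWr hP' ▸ hfin⟩
  · refine ⟨?_, (hWr hP).symm ▸ hfin⟩
    filter_upwards [hP, ae_lt_top (measurable_rMoment r y₀) hfin.ne] with p hp hlt
    exact ⟨hp, hlt⟩

end Wasserstein

/-! ### Relaxation of a nonnegative cost -/

section Relaxation

variable {T : Type*} [MeasurableSpace T] {D : ProbabilityMeasure T → ℝ≥0∞}

/-- The relaxation `p ↦ inf {∫ D dQ : I(Q) = p}` of a nonnegative cost `D` on probability measures.
It is the cost `C̃` for nonnegative integrands, without moment constraints. -/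
def relaxation (D : ProbabilityMeasure T → ℝ≥0∞) (p : ProbabilityMeasure T) : ℝ≥0∞ :=
  ⨅ Q : ProbabilityMeasure (ProbabilityMeasure T), ⨅ _ : probIntensity Q = p,
    ∫⁻ q, D q ∂(Q : Measure (ProbabilityMeasure T))

theorem relaxation_probIntensity_le_lintegral (D : ProbabilityMeasure T → ℝ≥0∞)
    (Q : ProbabilityMeasure (ProbabilityMeasure T)) :
    relaxation D (probIntensity Q) ≤ ∫⁻ q, D q ∂(Q : Measure (ProbabilityMeasure T)) :=
  iInf₂_le_of_le Q rfl le_rfl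

theorem probIntensity_probIntensity_map {Q : ProbabilityMeasure (ProbabilityMeasure T)}
    {σ : ProbabilityMeasure T → ProbabilityMeasure (ProbabilityMeasure T)} (hσ : Measurable σ)
    (hσQ : ∀ᵐ p ∂(Q : Measure (ProbabilityMeasure T)), probIntensity (σ p) = p) :
    probIntensity (probIntensity (Q.map hσ.aemeasurable)) = probIntensity Q := by
  refine ProbabilityMeasure.toMeasure_injective (Measure.ext fun A hA ↦ ?_)
  have hmA := measurable_toMeasure_apply hA
  rw [probIntensity_apply _ hA, lintegral_probIntensity _ hmA, probIntensity_apply _ hA,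
    ProbabilityMeasure.toMeasure_map,
    lintegral_map (measurable_lintegral_probabilityMeasure hmA) hσ]
  refine lintegral_congr_ae (hσQ.mono fun p hp ↦ ?_)
  simp only
  rw [← probIntensity_apply _ hA, hp]

theorem lintegral_probIntensity_map {Q : ProbabilityMeasure (ProbabilityMeasure T)}
    {σ : ProbabilityMeasure T → ProbabilityMeasure (ProbabilityMeasure T)} (hσ : Measurable σ)
    (hD : Measurable D) :
    ∫⁻ q, D q ∂(probIntensity (Q.map hσ.aemeasurable) : Measure (ProbabilityMeasure T)) =
      ∫⁻ p, ∫⁻ q, D q ∂(σ p : Measure (ProbabilityMeasure T))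
        ∂(Q : Measure (ProbabilityMeasure T)) := by
  rw [lintegral_probIntensity _ hD, ProbabilityMeasure.toMeasure_map,
    lintegral_map (measurable_lintegral_probabilityMeasure hD) hσ]

open Classical in
/-- The integral `∫ D dQ`, set to `∞` unless `I(Q) = p`; infimizing over `Q` gives
`relaxation D p`. -/
def constrainedLIntegral (D : ProbabilityMeasure T → ℝ≥0∞)
    (pQ : ProbabilityMeasure T × ProbabilityMeasure (ProbabilityMeasure T)) : ℝ≥0∞ :=
  if probIntensity pQ.2 = pQ.1 then ∫⁻ q, D q ∂(pQ.2 : Measure (ProbabilityMeasure T)) else ⊤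

theorem iInf_constrainedLIntegral (D : ProbabilityMeasure T → ℝ≥0∞) (p : ProbabilityMeasure T) :
    ⨅ Q, constrainedLIntegral D (p, Q) = relaxation D p := by
  classical exact iInf_congr fun _ ↦ (iInf_eq_if _).symm

variable [StandardBorelSpace T]

theorem measurable_constrainedLIntegral (hD : Measurable D) :
    Measurable (constrainedLIntegral D) := by
  have hconstraint : MeasurableSet {pQ : ProbabilityMeasure T ×
      ProbabilityMeasure (ProbabilityMeasure T) | probIntensity pQ.2 = pQ.1} :=
    measurableSet_eq_fun (measurable_probIntensity.comp measurable_snd) measurable_fst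
  exact Measurable.ite hconstraint
    ((measurable_lintegral_probabilityMeasure hD).comp measurable_snd) measurable_const

theorem aemeasurable_relaxation (hD : Measurable D)
    (Q : ProbabilityMeasure (ProbabilityMeasure T)) :
    AEMeasurable (relaxation D) (Q : Measure (ProbabilityMeasure T)) := by
  have hne : Nonempty (ProbabilityMeasure (ProbabilityMeasure T)) := ⟨Q⟩
  simpa only [iInf_constrainedLIntegral] using aemeasurable_iInf_of_standardBorel
    (Q : Measure (ProbabilityMeasure T)) (measurable_constrainedLIntegral hD)

theorem exists_measurable_lintegral_le_relaxation_add (hD : Measurable D)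
    {Q : ProbabilityMeasure (ProbabilityMeasure T)}
    (hQ : ∫⁻ q, relaxation D q ∂(Q : Measure (ProbabilityMeasure T)) ≠ ⊤) {ε : ℝ≥0}
    (hε : ε ≠ 0) :
    ∃ σ : ProbabilityMeasure T → ProbabilityMeasure (ProbabilityMeasure T), Measurable σ ∧
      ∀ᵐ p ∂(Q : Measure (ProbabilityMeasure T)), probIntensity (σ p) = p ∧
        ∫⁻ q, D q ∂(σ p : Measure (ProbabilityMeasure T)) ≤ relaxation D p + ε := by
  have hne : Nonempty (ProbabilityMeasure (ProbabilityMeasure T)) := ⟨Q⟩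
  obtain ⟨σ, hσ, hle⟩ := exists_measurable_ae_le_iInf_add (Q : Measure (ProbabilityMeasure T))
    (measurable_constrainedLIntegral hD) (ENNReal.coe_ne_zero.2 hε)
  simp only [iInf_constrainedLIntegral] at hle
  refine ⟨σ, hσ, ?_⟩
  filter_upwards [hle, ae_lt_top' (aemeasurable_relaxation hD Q) hQ] with p hp hfin
  have hlt := hp.trans_lt (ENNReal.add_lt_top.2 ⟨hfin, ENNReal.coe_lt_top⟩)
  by_cases hI : probIntensity (σ p) = p
  · exact ⟨hI, by simpa only [constrainedLIntegral, hI, if_true] using hp⟩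
  · simp only [constrainedLIntegral, hI, if_false, lt_self_iff_false] at hlt

theorem relaxation_probIntensity_le (hD : Measurable D)
    (Q : ProbabilityMeasure (ProbabilityMeasure T)) :
    relaxation D (probIntensity Q) ≤
      ∫⁻ q, relaxation D q ∂(Q : Measure (ProbabilityMeasure T)) := by
  by_cases htop : ∫⁻ q, relaxation D q ∂(Q : Measure (ProbabilityMeasure T)) = ⊤
  · exact htop ▸ le_top
  refine ENNReal.le_of_forall_pos_le_add fun ε hε _ ↦ ?_
  obtain ⟨σ, hσ, hσQ⟩ := exists_measurable_lintegral_le_relaxation_add hD htop hε.ne'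
  calc relaxation D (probIntensity Q)
      = relaxation D (probIntensity (probIntensity (Q.map hσ.aemeasurable))) := by
        rw [probIntensity_probIntensity_map hσ (hσQ.mono fun p hp ↦ hp.1)]
    _ ≤ ∫⁻ p, ∫⁻ q, D q ∂(σ p : Measure (ProbabilityMeasure T))
          ∂(Q : Measure (ProbabilityMeasure T)) :=
        (relaxation_probIntensity_le_lintegral D _).trans_eq (lintegral_probIntensity_map hσ hD)
    _ ≤ ∫⁻ p, (relaxation D p + ε) ∂(Q : Measure (ProbabilityMeasure T)) :=
        lintegral_mono_ae (hσQ.mono fun p hp ↦ hp.2)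
    _ = ∫⁻ q, relaxation D q ∂(Q : Measure (ProbabilityMeasure T)) + ε := by
        rw [lintegral_add_right _ measurable_const, lintegral_const, measure_univ, mul_one]

end Relaxation

/-! ### Extended-real integrals -/

section ExtendedIntegral

theorem coe_sub_coe_eq_of_add_eq_add {a b d g : ℝ≥0∞} (hb : b ≠ ⊤) (hg : g ≠ ⊤)
    (h : a + g = b + d) : (a : EReal) - b = d - g := by
  lift b to ℝ≥0 using hb
  lift g to ℝ≥0 using hg
  have hE : (a : EReal) + (g : ℝ) = (b : ℝ) + d := by
    have hcoe := congrArg ((↑) : ℝ≥0∞ → EReal) h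
    rwa [EReal.coe_ennreal_add, EReal.coe_ennreal_add] at hcoe
  change (a : EReal) - (b : ℝ) = d - (g : ℝ)
  rw [← EReal.add_sub_cancel_right (a := (a : EReal)) (b := g), hE, add_sub_assoc,
    EReal.add_sub_cancel_left]

theorem eInt_eq_lintegral_sub_lintegral {Ω : Type*} [MeasurableSpace Ω] {ν : Measure Ω}
    {f : Ω → EReal} {D g : Ω → ℝ≥0∞} (hD : AEMeasurable D ν) (hg : AEMeasurable g ν)
    (hgν : ∫⁻ x, g x ∂ν ≠ ⊤) (hf : ∀ᵐ x ∂ν, f x = (D x : EReal) - g x) :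
    eInt f ν = ((∫⁻ x, D x ∂ν : ℝ≥0∞) : EReal) - ((∫⁻ x, g x ∂ν : ℝ≥0∞) : EReal) := by
  have hpos : ∫⁻ x, epos (f x) ∂ν = ∫⁻ x, (D x - g x) ∂ν := by
    refine lintegral_congr_ae (hf.mono fun x hx ↦ ?_)
    change (f x).toENNReal = _
    rw [hx, EReal.toENNReal_sub (EReal.coe_ennreal_nonneg _), EReal.toENNReal_coe,
      EReal.toENNReal_coe]
  have hneg : ∫⁻ x, epos (-f x) ∂ν = ∫⁻ x, (g x - D x) ∂ν := by
    refine lintegral_congr_ae ?_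
    filter_upwards [hf, ae_lt_top' hg hgν] with x hx hlt
    change (-f x).toENNReal = _
    rw [hx, EReal.neg_sub (.inl (EReal.coe_ennreal_ne_bot _))
      (.inr (EReal.coe_ennreal_eq_top_iff.not.2 hlt.ne)), add_comm, ← sub_eq_add_neg,
      EReal.toENNReal_sub (EReal.coe_ennreal_nonneg _), EReal.toENNReal_coe, EReal.toENNReal_coe]
  have hsum : ∫⁻ x, (D x - g x) ∂ν + ∫⁻ x, g x ∂ν = ∫⁻ x, (g x - D x) ∂ν + ∫⁻ x, D x ∂ν := by
    rw [← lintegral_add_right' _ hg, ← lintegral_add_right' _ hD]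
    exact lintegral_congr fun x ↦ by rw [tsub_add_eq_max, tsub_add_eq_max, max_comm]
  rw [eInt, hpos, hneg]
  exact coe_sub_coe_eq_of_add_eq_add
    (ne_top_of_le_ne_top hgν (lintegral_mono fun x ↦ tsub_le_self)) hgν hsum

theorem eInt_map_toMeasure {T : Type*} [MeasurableSpace T] (f : Measure T → EReal)
    (Q : Measure (ProbabilityMeasure T)) :
    eInt f (Q.map ProbabilityMeasure.toMeasure) = eInt (fun q : ProbabilityMeasure T ↦ f q) Q := by
  simp only [eInt, measurableEmbedding_toMeasure.lintegral_map]

theorem coe_iInf_sub {ι : Sort*} (a : ι → ℝ≥0∞) {g : ℝ≥0∞} (hg : g ≠ ⊤) :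
    ((⨅ i, a i : ℝ≥0∞) : EReal) - g = ⨅ i, ((a i : EReal) - g) := by
  lift g to ℝ≥0 using hg
  have hmono : Monotone fun b : ℝ≥0∞ ↦ (b : EReal) - (g : ℝ) := fun b c hbc ↦
    EReal.sub_le_sub (EReal.coe_ennreal_le_coe_ennreal_iff.2 hbc) le_rfl
  have hcont : Continuous fun b : ℝ≥0∞ ↦ (b : EReal) - (g : ℝ) := by
    simp only [sub_eq_add_neg, ← EReal.coe_neg]
    exact continuous_iff_continuousAt.2 fun b ↦ (EReal.continuousAt_add
      (.inr (EReal.coe_ne_bot _)) (.inr (EReal.coe_ne_top _))).comp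
        (continuous_coe_ennreal_ereal.prodMk continuous_const).continuousAt
  exact hmono.map_iInf_of_continuousAt hcont.continuousAt (by simp)

end ExtendedIntegral

/-! ### Reduction to a nonnegative cost -/

section Reduction

variable {Y : Type*} [MeasurableSpace Y] [MetricSpace Y] {r : ℝ} {y₀ : Y} {c : ℝ≥0}

/-- The affine function `p ↦ c * (1 + ∫ d(y, y₀)^r p(dy))`, whose negative bounds the cost from
below on `𝒫_r`. -/
def momentBound (r : ℝ) (y₀ : Y) (c : ℝ≥0) (p : Measure Y) : ℝ≥0∞ :=
  c * (1 + rMoment r y₀ p)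

theorem momentBound_ne_top {p : Measure Y} (hp : rMoment r y₀ p < ⊤) :
    momentBound r y₀ c p ≠ ⊤ :=
  ENNReal.mul_ne_top ENNReal.coe_ne_top (ENNReal.add_ne_top.2 ⟨ENNReal.one_ne_top, hp.ne⟩)

/-- The nonnegative cost obtained from `f` by adding `momentBound r y₀ c`. -/
def shiftedCost (r : ℝ) (y₀ : Y) (c : ℝ≥0) (f : Measure Y → EReal) (p : ProbabilityMeasure Y) :
    ℝ≥0∞ :=
  (f p + momentBound r y₀ c (p : Measure Y)).toENNReal

/-- `f` is bounded below on `𝒫_r` by an affine function of the `r`-th moment. -/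
def MomentMinorized (r : ℝ) (y₀ : Y) (c : ℝ≥0) (f : Measure Y → EReal) : Prop :=
  ∀ p ∈ Pr r y₀, -(momentBound r y₀ c p : EReal) ≤ f p

theorem MomentMinorized.coe_shiftedCost {f : Measure Y → EReal} (hr : 0 ≤ r)
    (hf : MomentMinorized r y₀ c f) {p : ProbabilityMeasure Y}
    (hp : rMoment r y₀ (p : Measure Y) < ⊤) :
    (shiftedCost r y₀ c f p : EReal) = f p + momentBound r y₀ c (p : Measure Y) := by
  refine EReal.coe_toENNReal ?_
  have hle := hf p ((mem_Pr_iff hr).2 ⟨inferInstance, hp⟩)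
  lift momentBound r y₀ c (p : Measure Y) to ℝ≥0 using momentBound_ne_top hp with g
  change -((g : ℝ) : EReal) ≤ f p at hle
  change 0 ≤ f p + ((g : ℝ) : EReal)
  rwa [← EReal.sub_le_iff_le_add (.inl (EReal.coe_ne_bot _)) (.inl (EReal.coe_ne_top _)), zero_sub]

theorem MomentMinorized.eq_shiftedCost_sub {f : Measure Y → EReal} (hr : 0 ≤ r)
    (hf : MomentMinorized r y₀ c f) {p : ProbabilityMeasure Y}
    (hp : rMoment r y₀ (p : Measure Y) < ⊤) :
    f p = (shiftedCost r y₀ c f p : EReal) - momentBound r y₀ c (p : Measure Y) := by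
  rw [hf.coe_shiftedCost hr hp]
  lift momentBound r y₀ c (p : Measure Y) to ℝ≥0 using momentBound_ne_top hp with g
  exact EReal.add_sub_cancel_right.symm

variable [BorelSpace Y]

theorem measurable_momentBound (r : ℝ) (y₀ : Y) (c : ℝ≥0) :
    Measurable (momentBound r y₀ c) :=
  ((measurable_rMoment r y₀).const_add 1).const_mul _

theorem lintegral_momentBound (r : ℝ) (y₀ : Y) (c : ℝ≥0)
    (Q : ProbabilityMeasure (ProbabilityMeasure Y)) :
    ∫⁻ q, momentBound r y₀ c (q : Measure Y) ∂(Q : Measure (ProbabilityMeasure Y)) =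
      momentBound r y₀ c (probIntensity Q : Measure Y) := by
  have hmeas : Measurable fun q : ProbabilityMeasure Y ↦ rMoment r y₀ (q : Measure Y) :=
    (measurable_rMoment r y₀).comp measurable_toMeasure
  simp only [momentBound]
  rw [lintegral_const_mul _ (hmeas.const_add 1), lintegral_add_left measurable_const,
    lintegral_const, measure_univ, mul_one, rMoment_probIntensity]

theorem eInt_eq_lintegral_sub_momentBound {Q : ProbabilityMeasure (ProbabilityMeasure Y)}
    (hQ : rMoment r y₀ (probIntensity Q : Measure Y) < ⊤) {f : ProbabilityMeasure Y → EReal}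
    {D : ProbabilityMeasure Y → ℝ≥0∞} (hD : AEMeasurable D (Q : Measure (ProbabilityMeasure Y)))
    (hf : ∀ q : ProbabilityMeasure Y, rMoment r y₀ (q : Measure Y) < ⊤ →
      f q = (D q : EReal) - momentBound r y₀ c (q : Measure Y)) :
    eInt f Q = ((∫⁻ q, D q ∂(Q : Measure (ProbabilityMeasure Y)) : ℝ≥0∞) : EReal) -
      momentBound r y₀ c (probIntensity Q : Measure Y) := by
  have hfin := ae_lt_top ((measurable_rMoment r y₀).comp measurable_toMeasure)
    ((rMoment_probIntensity r y₀ Q).symm.trans_lt hQ).ne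
  have hmeas := (measurable_momentBound r y₀ c).comp measurable_toMeasure
  rw [← lintegral_momentBound]
  refine eInt_eq_lintegral_sub_lintegral hD hmeas.aemeasurable ?_ (hfin.mono hf)
  exact (lintegral_momentBound r y₀ c Q).trans_ne (momentBound_ne_top hQ)

theorem measurable_shiftedCost {f : Measure Y → EReal} (hf : Measurable f) :
    Measurable (shiftedCost r y₀ c f) :=
  measurable_ereal_toENNReal.comp <| (hf.comp measurable_toMeasure).add
    ((measurable_momentBound r y₀ c).comp measurable_toMeasure).coe_ereal_ennreal

section TildeC

variable {X : Type*} [MeasurableSpace X] {C : X × Measure Y → EReal} {x : X}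

theorem tildeC_eq_iInf_probIntensity (hr : 0 < r) (C : X × Measure Y → EReal) (x : X)
    {p : ProbabilityMeasure Y} (hp : rMoment r y₀ (p : Measure Y) < ⊤) :
    tildeC r y₀ C (x, p) = ⨅ Q : ProbabilityMeasure (ProbabilityMeasure Y),
      ⨅ _ : probIntensity Q = p, eInt (fun q : ProbabilityMeasure Y ↦ C (x, q)) Q := by
  refine le_antisymm (le_iInf₂ fun Q hQ ↦ ?_) (le_iInf₂ fun Q hQ ↦ ?_)
  · rw [← eInt_map_toMeasure fun q ↦ C (x, q)]
    have hI : intensity ((Q : Measure (ProbabilityMeasure Y)).map ProbabilityMeasure.toMeasure)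
      = p := congrArg ProbabilityMeasure.toMeasure hQ
    have hprob : ∀ᵐ q ∂(Q : Measure (ProbabilityMeasure Y)).map ProbabilityMeasure.toMeasure,
        IsProbabilityMeasure q :=
      (ae_map_iff measurable_toMeasure.aemeasurable measurableSet_setOf_isProbabilityMeasure).2
        (.of_forall fun q ↦ inferInstance)
    exact iInf₂_le (f := fun R (_ : R ∈ {R | R ∈ PrP r y₀ ∧ intensity R = (p : Measure Y)}) ↦
      eInt (fun q ↦ C (x, q)) R) _ ⟨(mem_PrP_iff hr).2
        ⟨Measure.isProbabilityMeasure_map measurable_toMeasure.aemeasurable, hprob, hI ▸ hp⟩, hI⟩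
  · obtain ⟨hQ₁, hQ₂, -⟩ := (mem_PrP_iff hr).1 hQ.1
    obtain ⟨P, rfl⟩ := exists_map_toMeasure_eq Q hQ₂
    rw [eInt_map_toMeasure]
    exact iInf₂_le_of_le P (ProbabilityMeasure.toMeasure_injective hQ.2) le_rfl

theorem tildeC_eq_relaxation_sub (hr : 0 < r) (hC : Measurable fun q ↦ C (x, q))
    (hlb : MomentMinorized r y₀ c fun q ↦ C (x, q)) {p : ProbabilityMeasure Y}
    (hp : rMoment r y₀ (p : Measure Y) < ⊤) :
    tildeC r y₀ C (x, p) = (relaxation (shiftedCost r y₀ c fun q ↦ C (x, q)) p : EReal) -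
      momentBound r y₀ c (p : Measure Y) := by
  rw [tildeC_eq_iInf_probIntensity hr C x hp, relaxation, coe_iInf_sub _ (momentBound_ne_top hp)]
  refine iInf_congr fun Q ↦ ?_
  rw [coe_iInf_sub _ (momentBound_ne_top hp)]
  refine iInf_congr fun hQ ↦ ?_
  subst hQ
  exact eInt_eq_lintegral_sub_momentBound hp (measurable_shiftedCost hC).aemeasurable
    fun q hq ↦ hlb.eq_shiftedCost_sub hr.le hq

theorem tildeC_le_eInt_tildeC [CompleteSpace Y] [SecondCountableTopology Y] (hr : 0 < r)
    (hC : Measurable fun q ↦ C (x, q)) (hlb : MomentMinorized r y₀ c fun q ↦ C (x, q))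
    {Q : Measure (Measure Y)} (hQ : Q ∈ PrP r y₀) :
    tildeC r y₀ C (x, intensity Q) ≤ eInt (fun q ↦ tildeC r y₀ C (x, q)) Q := by
  obtain ⟨hQ₁, hQ₂, hfin⟩ := (mem_PrP_iff hr).1 hQ
  obtain ⟨P, rfl⟩ := exists_map_toMeasure_eq Q hQ₂
  have hD := measurable_shiftedCost (r := r) (y₀ := y₀) (c := c) hC
  rw [eInt_map_toMeasure, eInt_eq_lintegral_sub_momentBound hfin (aemeasurable_relaxation hD P)
    fun q hq ↦ tildeC_eq_relaxation_sub hr hC hlb hq]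
  refine (tildeC_eq_relaxation_sub hr hC hlb (p := probIntensity P) hfin).trans_le ?_
  exact EReal.sub_le_sub
    (EReal.coe_ennreal_le_coe_ennreal_iff.2 (relaxation_probIntensity_le hD P)) le_rfl

end TildeC

end Reduction

/-! ### Transport plans from partial couplings -/

section PartialCoupling

variable {Y : Type*} [MeasurableSpace Y]

theorem exists_mem_Couplings_of_univ_eq {μ ν : Measure Y} [IsFiniteMeasure μ] [IsFiniteMeasure ν]
    (h : μ univ = ν univ) : ∃ π, π ∈ Couplings μ ν := by
  rcases eq_zero_or_neZero μ with rfl | hμ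
  · obtain rfl := Measure.measure_univ_eq_zero.1 (h.symm.trans (by simp))
    exact ⟨0, by simp [Couplings]⟩
  · have hmass : (μ univ)⁻¹ * μ univ = 1 :=
      ENNReal.inv_mul_cancel (NeZero.ne _) (measure_ne_top _ _)
    refine ⟨(μ univ)⁻¹ • μ.prod ν, ?_, ?_⟩
    · rw [Measure.map_smul, Measure.map_fst_prod, ← h, smul_smul, hmass, one_smul]
    · rw [Measure.map_smul, Measure.map_snd_prod, smul_smul, hmass, one_smul]

theorem inv_max_mul_mul {a b : ℝ≥0∞} (ha : a ≠ ⊤) (hb : b ≠ ⊤) :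
    (max a b)⁻¹ * (a * b) = min a b := by
  rcases eq_or_ne (max a b) 0 with h | h
  · have ha₀ : a = 0 := le_bot_iff.1 ((le_max_left a b).trans_eq h)
    simp [ha₀]
  · rw [← max_mul_min a b, ← mul_assoc, ENNReal.inv_mul_cancel h (max_ne_top ha hb), one_mul]

/-- The largest multiple of the product of `μ` and `ν` restricted to `A` whose marginals are
dominated by `μ` and `ν`. -/
def cellCoupling (μ ν : Measure Y) (A : Set Y) : Measure (Y × Y) :=
  (max (μ A) (ν A))⁻¹ • (μ.restrict A).prod (ν.restrict A)

variable {μ ν : Measure Y} {A : Set Y} [IsFiniteMeasure ν]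

theorem map_fst_cellCoupling_le : (cellCoupling μ ν A).map Prod.fst ≤ μ.restrict A := by
  rw [cellCoupling, Measure.map_smul, Measure.map_fst_prod, smul_smul, Measure.restrict_apply_univ]
  have hle : (max (μ A) (ν A))⁻¹ * ν A ≤ 1 :=
    (mul_le_mul_right (le_max_right _ _) _).trans (ENNReal.inv_mul_le_one _)
  exact Measure.le_iff'.2 fun s ↦ mul_le_of_le_one_left' hle

/-- The sum of the couplings `cellCoupling μ ν (A i)` over finitely many cells. -/
def cellsCoupling {ι : Type*} (μ ν : Measure Y) (s : Finset ι) (A : ι → Set Y) :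
    Measure (Y × Y) :=
  ∑ i ∈ s, cellCoupling μ ν (A i)

variable {ι : Type*} {s : Finset ι} {A : ι → Set Y}

theorem map_fst_cellsCoupling_le (hA : ∀ i, MeasurableSet (A i))
    (hd : Pairwise (Function.onFun Disjoint A)) :
    (cellsCoupling μ ν s A).map Prod.fst ≤ μ.restrict (⋃ i ∈ s, A i) := by
  have hsum : ∑ i ∈ s, μ.restrict (A i) = μ.restrict (⋃ i ∈ s, A i) := by
    rw [Measure.restrict_biUnion_finset (fun i _ j _ hij ↦ hd hij) hA, Measure.sum_fintype]
    exact (Finset.sum_coe_sort s fun i ↦ μ.restrict (A i)).symm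
  rw [← hsum, cellsCoupling, ← Measure.mapₗ_apply_of_measurable measurable_fst, map_sum]
  exact Finset.sum_le_sum fun i _ ↦ by
    rw [Measure.mapₗ_apply_of_measurable measurable_fst]
    exact map_fst_cellCoupling_le

variable [IsFiniteMeasure μ]

theorem cellCoupling_univ (A : Set Y) : cellCoupling μ ν A univ = min (μ A) (ν A) := by
  rw [cellCoupling, Measure.smul_apply, ← univ_prod_univ, Measure.prod_prod, smul_eq_mul,
    Measure.restrict_apply_univ, Measure.restrict_apply_univ,
    inv_max_mul_mul (measure_ne_top _ _) (measure_ne_top _ _)]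

theorem map_swap_cellCoupling (A : Set Y) :
    (cellCoupling μ ν A).map Prod.swap = cellCoupling ν μ A := by
  rw [cellCoupling, Measure.map_smul, Measure.prod_swap, max_comm, cellCoupling]

theorem cellCoupling_compl_eq_zero {A : Set Y} (hA : MeasurableSet A) :
    cellCoupling μ ν A (A ×ˢ A)ᶜ = 0 := by
  rw [cellCoupling, Measure.smul_apply, Measure.prod_restrict,
    Measure.restrict_apply (hA.prod hA).compl, compl_inter_self, measure_empty, smul_zero]

theorem cellsCoupling_univ :
    cellsCoupling μ ν s A univ = ∑ i ∈ s, min (μ (A i)) (ν (A i)) := by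
  simp only [cellsCoupling, Measure.finsetSum_apply, cellCoupling_univ]

theorem map_swap_cellsCoupling :
    (cellsCoupling μ ν s A).map Prod.swap = cellsCoupling ν μ s A := by
  rw [cellsCoupling, ← Measure.mapₗ_apply_of_measurable measurable_swap, map_sum]
  exact Finset.sum_congr rfl fun i _ ↦ by
    rw [Measure.mapₗ_apply_of_measurable measurable_swap, map_swap_cellCoupling]

end PartialCoupling

section WassersteinBound

theorem edist_rpow_le {Y : Type*} [PseudoMetricSpace Y] {r : ℝ} (hr : 1 ≤ r) (y₀ y z : Y) :
    edist y z ^ r ≤ 2 ^ r * (edist y y₀ ^ r + edist z y₀ ^ r) :=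
  calc edist y z ^ r ≤ (edist y y₀ + edist z y₀) ^ r :=
        ENNReal.rpow_le_rpow (edist_triangle_right y z y₀) (zero_le_one.trans hr)
    _ ≤ 2 ^ (r - 1) * (edist y y₀ ^ r + edist z y₀ ^ r) :=
        ENNReal.rpow_add_le_mul_rpow_add_rpow _ _ hr
    _ ≤ 2 ^ r * (edist y y₀ ^ r + edist z y₀ ^ r) := by
        gcongr
        · exact one_le_two
        · exact sub_le_self r zero_le_one

variable {Y : Type*} [MeasurableSpace Y] [MetricSpace Y] {r : ℝ}

theorem rMoment_mono {μ ν : Measure Y} (h : μ ≤ ν) (r : ℝ) (y₀ : Y) :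
    rMoment r y₀ μ ≤ rMoment r y₀ ν :=
  lintegral_mono' h le_rfl

theorem rMoment_le_mul_add_rMoment_restrict_compl {μ : Measure Y} {B : Set Y} {R : ℝ≥0∞}
    {y₀ : Y} (hB : MeasurableSet B) (hR : ∀ y ∈ B, edist y y₀ ^ r ≤ R) :
    rMoment r y₀ μ ≤ R * μ B + rMoment r y₀ (μ.restrict Bᶜ) := by
  rw [rMoment, ← lintegral_add_compl _ hB, ← setLIntegral_const]
  exact add_le_add (setLIntegral_mono measurable_const hR) le_rfl

variable {ι : Type*} {s : Finset ι} {A : ι → Set Y} {μ ν : Measure Y}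

theorem lintegral_cellsCoupling_le [IsProbabilityMeasure μ] [IsFiniteMeasure ν] {ε : ℝ≥0∞}
    (hA : ∀ i, MeasurableSet (A i))
    (hd : Pairwise (Function.onFun Disjoint A))
    (hε : ∀ i, ∀ y ∈ A i, ∀ z ∈ A i, edist y z ^ r ≤ ε) :
    ∫⁻ z, edist z.1 z.2 ^ r ∂cellsCoupling μ ν s A ≤ ε := by
  have hae : ∀ᵐ z ∂cellsCoupling μ ν s A, edist z.1 z.2 ^ r ≤ ε := by
    rw [ae_iff, cellsCoupling, Measure.finsetSum_apply]
    refine Finset.sum_eq_zero fun i _ ↦ measure_mono_null ?_ (cellCoupling_compl_eq_zero (hA i))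
    exact fun z hz hzA ↦ hz (hε i _ hzA.1 _ hzA.2)
  have hmass : cellsCoupling μ ν s A univ ≤ 1 := by
    have h := (map_fst_cellsCoupling_le (μ := μ) (ν := ν) (s := s) hA hd).trans
      Measure.restrict_le_self univ
    rwa [Measure.map_apply measurable_fst .univ, preimage_univ, measure_univ (μ := μ)] at h
  calc ∫⁻ z, edist z.1 z.2 ^ r ∂cellsCoupling μ ν s A
      ≤ ∫⁻ _, ε ∂cellsCoupling μ ν s A := lintegral_mono_ae hae
    _ = ε * cellsCoupling μ ν s A univ := lintegral_const _
    _ ≤ ε := mul_le_of_le_one_right' hmass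

/-- The mass of `μ` on the cells `A i` which the partial coupling of `μ` and `ν` leaves
unmatched, weighted by `R`, plus the moment of `μ` outside the cells. -/
def unmatchedMoment (r : ℝ) (y₀ : Y) (R : ℝ≥0∞) (s : Finset ι) (A : ι → Set Y)
    (μ ν : Measure Y) : ℝ≥0∞ :=
  R * (μ (⋃ i ∈ s, A i) - ∑ i ∈ s, min (μ (A i)) (ν (A i))) +
    rMoment r y₀ (μ.restrict (⋃ i ∈ s, A i)ᶜ)

theorem rMoment_sub_map_fst_cellsCoupling_le [IsFiniteMeasure μ] [IsFiniteMeasure ν]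
    {R : ℝ≥0∞} {y₀ : Y} (hA : ∀ i, MeasurableSet (A i)) (hd : Pairwise (Function.onFun Disjoint A))
    (hR : ∀ i ∈ s, ∀ y ∈ A i, edist y y₀ ^ r ≤ R) :
    rMoment r y₀ (μ - (cellsCoupling μ ν s A).map Prod.fst) ≤
      unmatchedMoment r y₀ R s A μ ν := by
  have hB : MeasurableSet (⋃ i ∈ s, A i) := Finset.measurableSet_biUnion _ fun i _ ↦ hA i
  have hle := map_fst_cellsCoupling_le (μ := μ) (ν := ν) (s := s) hA hd
  have := isFiniteMeasure_of_le _ hle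
  have hmatched : (cellsCoupling μ ν s A).map Prod.fst (⋃ i ∈ s, A i) =
      ∑ i ∈ s, min (μ (A i)) (ν (A i)) := by
    have hnull : (cellsCoupling μ ν s A).map Prod.fst (⋃ i ∈ s, A i)ᶜ = 0 :=
      le_bot_iff.1 ((hle _).trans_eq (by
        rw [Measure.restrict_apply hB.compl, compl_inter_self, measure_empty]; rfl))
    rw [← cellsCoupling_univ, measure_of_measure_compl_eq_zero hnull,
      Measure.map_apply measurable_fst .univ, preimage_univ]
  refine (rMoment_le_mul_add_rMoment_restrict_compl (R := R) hB fun y hy ↦ ?_).trans ?_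
  · obtain ⟨i, hi, hy⟩ := mem_iUnion₂.1 hy
    exact hR i hi y hy
  · rw [Measure.sub_apply hB (hle.trans Measure.restrict_le_self), hmatched]
    exact add_le_add le_rfl (rMoment_mono (Measure.restrict_mono subset_rfl Measure.sub_le) r y₀)

variable [BorelSpace Y]

theorem lintegral_edist_rpow_le_rMoment_add (hr : 1 ≤ r) (y₀ : Y) {μ ν : Measure Y}
    {π : Measure (Y × Y)} (hπ : π ∈ Couplings μ ν) :
    ∫⁻ z, edist z.1 z.2 ^ r ∂π ≤ 2 ^ r * (rMoment r y₀ μ + rMoment r y₀ ν) := by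
  have hmeas := measurable_edist_rpow r y₀
  calc ∫⁻ z, edist z.1 z.2 ^ r ∂π
      ≤ ∫⁻ z, 2 ^ r * (edist z.1 y₀ ^ r + edist z.2 y₀ ^ r) ∂π :=
        lintegral_mono fun z ↦ edist_rpow_le hr y₀ _ _
    _ = 2 ^ r * (rMoment r y₀ μ + rMoment r y₀ ν) := by
        have hfst : Measurable fun z : Y × Y ↦ edist z.1 y₀ ^ r := hmeas.comp measurable_fst
        have hsnd : Measurable fun z : Y × Y ↦ edist z.2 y₀ ^ r := hmeas.comp measurable_snd
        rw [lintegral_const_mul _ (by exact hfst.add hsnd), lintegral_add_left hfst, rMoment,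
          rMoment, ← hπ.1, ← hπ.2, lintegral_map hmeas measurable_fst,
          lintegral_map hmeas measurable_snd]

theorem Wr_rpow_le_of_map_le (hr : 1 ≤ r) (y₀ : Y) {μ ν : Measure Y} [IsProbabilityMeasure μ]
    [IsProbabilityMeasure ν] {τ : Measure (Y × Y)} (h₁ : τ.map Prod.fst ≤ μ)
    (h₂ : τ.map Prod.snd ≤ ν) :
    Wr r μ ν ^ r ≤ ∫⁻ z, edist z.1 z.2 ^ r ∂τ +
      2 ^ r * (rMoment r y₀ (μ - τ.map Prod.fst) + rMoment r y₀ (ν - τ.map Prod.snd)) := by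
  have := isFiniteMeasure_of_le μ h₁
  have := isFiniteMeasure_of_le ν h₂
  have hmass : (μ - τ.map Prod.fst) univ = (ν - τ.map Prod.snd) univ := by
    rw [Measure.sub_apply .univ h₁, Measure.sub_apply .univ h₂, measure_univ (μ := μ),
      measure_univ (μ := ν), Measure.map_apply measurable_fst .univ,
      Measure.map_apply measurable_snd .univ, preimage_univ, preimage_univ]
  obtain ⟨σ, hσ⟩ := exists_mem_Couplings_of_univ_eq hmass
  have hτσ : τ + σ ∈ Couplings μ ν := by
    refine ⟨?_, ?_⟩
    · rw [Measure.map_add _ _ measurable_fst, hσ.1, add_comm, Measure.sub_add_cancel_of_le h₁]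
    · rw [Measure.map_add _ _ measurable_snd, hσ.2, add_comm, Measure.sub_add_cancel_of_le h₂]
  refine (Wr_rpow_le (zero_lt_one.trans_le hr) hτσ).trans ?_
  rw [lintegral_add_measure]
  gcongr
  exact lintegral_edist_rpow_le_rMoment_add hr y₀ hσ

theorem Wr_rpow_le_unmatchedMoment [IsProbabilityMeasure μ] [IsProbabilityMeasure ν] (hr : 1 ≤ r)
    {ε R : ℝ≥0∞} {y₀ : Y}
    (hA : ∀ i, MeasurableSet (A i)) (hd : Pairwise (Function.onFun Disjoint A))
    (hε : ∀ i, ∀ y ∈ A i, ∀ z ∈ A i, edist y z ^ r ≤ ε)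
    (hR : ∀ i ∈ s, ∀ y ∈ A i, edist y y₀ ^ r ≤ R) :
    Wr r μ ν ^ r ≤ ε + 2 ^ r *
      (unmatchedMoment r y₀ R s A μ ν + unmatchedMoment r y₀ R s A ν μ) := by
  have hsnd : (cellsCoupling μ ν s A).map Prod.snd = (cellsCoupling ν μ s A).map Prod.fst := by
    rw [← map_swap_cellsCoupling (μ := μ), Measure.map_map measurable_fst measurable_swap]
    rfl
  have hfst_le (μ ν : Measure Y) [IsProbabilityMeasure μ] [IsProbabilityMeasure ν] :
      (cellsCoupling μ ν s A).map Prod.fst ≤ μ :=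
    (map_fst_cellsCoupling_le hA hd).trans Measure.restrict_le_self
  refine (Wr_rpow_le_of_map_le hr y₀ (hfst_le μ ν) (hsnd.trans_le (hfst_le ν μ))).trans ?_
  rw [hsnd]
  gcongr
  · exact lintegral_cellsCoupling_le hA hd hε
  · exact rMoment_sub_map_fst_cellsCoupling_le hA hd hR
  · exact rMoment_sub_map_fst_cellsCoupling_le hA hd hR

end WassersteinBound

/-! ### Weak convergence and Wasserstein convergence -/

section LowerSemicontinuous

variable {Ω : Type*} [MeasurableSpace Ω] [TopologicalSpace Ω]

theorem lowerSemicontinuous_indicator {Ω : Type*} [TopologicalSpace Ω] {U : Set Ω}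
    {f : Ω → ℝ≥0∞} (hU : IsOpen U) (hf : LowerSemicontinuous f) :
    LowerSemicontinuous (U.indicator f) := by
  refine lowerSemicontinuous_iff_isOpen_preimage.2 fun a ↦ ?_
  have hpre : U.indicator f ⁻¹' Ioi a = U ∩ f ⁻¹' Ioi a := by
    ext x
    by_cases hx : x ∈ U <;> simp [hx]
  exact hpre ▸ hU.inter (hf.isOpen_preimage a)

theorem lintegral_ofReal_le_liminf [OpensMeasurableSpace Ω] {μ : Measure Ω} {μs : ℕ → Measure Ω}
    {f : Ω → ℝ} (hf : LowerSemicontinuous f) (hf₀ : 0 ≤ f)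
    (hopen : ∀ U, IsOpen U → μ U ≤ liminf (fun n ↦ μs n U) atTop) :
    ∫⁻ x, ENNReal.ofReal (f x) ∂μ ≤
      liminf (fun n ↦ ∫⁻ x, ENNReal.ofReal (f x) ∂(μs n)) atTop := by
  simp_rw [lintegral_eq_lintegral_meas_lt _ (.of_forall hf₀) hf.measurable.aemeasurable]
  calc ∫⁻ t : ℝ in Ioi 0, μ {x | t < f x}
      ≤ ∫⁻ t : ℝ in Ioi 0, liminf (fun n ↦ μs n {x | t < f x}) atTop :=
        lintegral_mono fun t ↦ hopen _ (hf.isOpen_preimage t)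
    _ ≤ liminf (fun n ↦ ∫⁻ t : ℝ in Ioi 0, μs n {x | t < f x}) atTop :=
        lintegral_liminf_le fun n ↦ Antitone.measurable fun s t hst ↦
          measure_mono fun x hx ↦ hst.trans_lt hx

theorem lintegral_le_liminf_of_tendsto [HasOuterApproxClosed Ω] [BorelSpace Ω]
    {p : ProbabilityMeasure Ω} {ps : ℕ → ProbabilityMeasure Ω} (h : Tendsto ps atTop (𝓝 p))
    {f : Ω → ℝ≥0∞} (hf : LowerSemicontinuous f) :
    ∫⁻ x, f x ∂(p : Measure Ω) ≤ liminf (fun n ↦ ∫⁻ x, f x ∂(ps n : Measure Ω)) atTop := by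
  have htrunc (N : ℕ) : ∫⁻ x, min (f x) N ∂(p : Measure Ω) ≤
      liminf (fun n ↦ ∫⁻ x, f x ∂(ps n : Measure Ω)) atTop := by
    have hne (a : ℝ≥0∞) : min a N ≠ ⊤ :=
      ne_top_of_le_ne_top (ENNReal.natCast_ne_top N) (min_le_right a N)
    have hcont : Continuous fun a : ℝ≥0∞ ↦ (min a N).toReal :=
      ENNReal.continuousOn_toReal.comp_continuous (continuous_id.min continuous_const) hne
    have hmono : Monotone fun a : ℝ≥0∞ ↦ (min a N).toReal := fun a b hab ↦
      ENNReal.toReal_mono (hne b) (min_le_min_right _ hab)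
    have hle := lintegral_ofReal_le_liminf (hcont.comp_lowerSemicontinuous hf hmono)
      (fun x ↦ ENNReal.toReal_nonneg) fun U hU ↦
        ProbabilityMeasure.le_liminf_measure_open_of_tendsto h hU
    simp only [Function.comp_apply, ENNReal.ofReal_toReal (hne _)] at hle
    exact hle.trans (liminf_le_liminf (.of_forall fun n ↦ lintegral_mono fun x ↦ min_le_left _ _))
  have hsup (x : Ω) : ⨆ N : ℕ, min (f x) N = f x := by
    rw [← inf_iSup_eq, ENNReal.iSup_natCast, inf_top_eq]
  calc ∫⁻ x, f x ∂(p : Measure Ω) = ∫⁻ x, ⨆ N : ℕ, min (f x) N ∂(p : Measure Ω) := by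
        simp only [hsup]
    _ = ⨆ N : ℕ, ∫⁻ x, min (f x) N ∂(p : Measure Ω) :=
        lintegral_iSup (fun N ↦ hf.measurable.min measurable_const)
          fun M N hMN x ↦ min_le_min_left _ (Nat.cast_le.2 hMN)
    _ ≤ liminf (fun n ↦ ∫⁻ x, f x ∂(ps n : Measure Ω)) atTop := iSup_le htrunc

end LowerSemicontinuous

section WeakToWasserstein

open Finset (range)

theorem edist_rpow_le_of_dist_le {Y : Type*} [PseudoMetricSpace Y] {r : ℝ} (hr : 0 < r)
    {ε : ℝ≥0} {y z : Y} (h : dist y z ≤ (ε ^ r⁻¹ : ℝ≥0)) : edist y z ^ r ≤ ε := by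
  rw [← ENNReal.le_rpow_inv_iff hr, ← ENNReal.coe_rpow_of_nonneg _ (by positivity), edist_nndist,
    ENNReal.coe_le_coe]
  exact_mod_cast h

theorem exists_null_frontier_cells {Y : Type*} [MeasurableSpace Y] [PseudoMetricSpace Y]
    [BorelSpace Y] [SecondCountableTopology Y] [Nonempty Y] (μ : Measure Y) [SFinite μ] {δ : ℝ}
    (hδ : 0 < δ) :
    ∃ A : ℕ → Set Y, (∀ i, MeasurableSet (A i)) ∧ Pairwise (Function.onFun Disjoint A) ∧
      (∀ i, μ (frontier (A i)) = 0) ∧ (∀ i, ∀ y ∈ A i, ∀ z ∈ A i, dist y z ≤ δ) ∧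
      (∀ n, IsOpen (⋃ i ∈ range (n + 1), A i)) ∧
      (∀ n, Bornology.IsBounded (⋃ i ∈ range (n + 1), A i)) ∧ ⋃ i, A i = univ := by
  have hradius (i : ℕ) := exists_null_frontier_thickening μ {TopologicalSpace.denseSeq Y i}
    (show δ / 4 < δ / 2 by linarith)
  choose ρ hρ hfrontier using hradius
  simp only [Metric.thickening_singleton] at hfrontier
  set B : ℕ → Set Y := fun i ↦ Metric.ball (TopologicalSpace.denseSeq Y i) (ρ i)
  have hunion (n : ℕ) : ⋃ i ∈ range (n + 1), disjointed B i = ⋃ i ∈ range (n + 1), B i := by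
    rw [biUnion_range_succ_disjointed, partialSups_eq_biUnion_range]
  refine ⟨disjointed B, .disjointed fun i ↦ measurableSet_ball, disjoint_disjointed B,
    fun i ↦ ?_, fun i y hy z hz ↦ ?_, fun n ↦ ?_, fun n ↦ ?_, ?_⟩
  · refine disjointedRec (p := fun t ↦ μ (frontier t) = 0) (fun t j ht ↦ ?_) (hfrontier i)
    rw [Set.sdiff_eq]
    exact null_frontier_inter ht ((frontier_compl (B j)).symm ▸ hfrontier j)
  · have hy' := Metric.mem_ball.1 (disjointed_subset B i hy)
    have hz' := Metric.mem_ball.1 (disjointed_subset B i hz)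
    linarith [dist_triangle_right y z (TopologicalSpace.denseSeq Y i), (hρ i).2]
  · rw [hunion]
    exact isOpen_biUnion fun i _ ↦ Metric.isOpen_ball
  · rw [hunion]
    exact (Bornology.isBounded_biUnion_finset _).2 fun i _ ↦ Metric.isBounded_ball
  · rw [iUnion_disjointed, eq_univ_iff_forall]
    intro y
    obtain ⟨i, hi⟩ := (TopologicalSpace.denseRange_denseSeq Y).exists_dist_lt y
      (show 0 < δ / 4 by positivity)
    exact mem_iUnion.2 ⟨i, Metric.mem_ball.2 (hi.trans (hρ i).1)⟩

theorem tendsto_mul_measure_biUnion_sub {Y ι : Type*} [MeasurableSpace Y] {s : Finset ι}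
    {A : ι → Set Y} {R : ℝ≥0∞} {μs νs : ℕ → Measure Y} {μ : Measure Y} [IsFiniteMeasure μ]
    (hA : ∀ i, MeasurableSet (A i)) (hd : Pairwise (Function.onFun Disjoint A)) (hR : R ≠ ⊤)
    (hμ : ∀ i, Tendsto (fun n ↦ μs n (A i)) atTop (𝓝 (μ (A i))))
    (hν : ∀ i, Tendsto (fun n ↦ νs n (A i)) atTop (𝓝 (μ (A i)))) :
    Tendsto (fun n ↦ R * (μs n (⋃ i ∈ s, A i) - ∑ i ∈ s, min (μs n (A i)) (νs n (A i))))
      atTop (𝓝 0) := by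
  have hunion (ν : Measure Y) : ν (⋃ i ∈ s, A i) = ∑ i ∈ s, ν (A i) :=
    measure_biUnion_finset (fun i _ j _ hij ↦ hd hij) fun i _ ↦ hA i
  simp only [hunion]
  have hmin : Tendsto (fun n ↦ ∑ i ∈ s, min (μs n (A i)) (νs n (A i))) atTop
      (𝓝 (∑ i ∈ s, μ (A i))) :=
    tendsto_finsetSum _ fun i _ ↦ by simpa only [min_self] using (hμ i).min (hν i)
  have hne : ∑ i ∈ s, μ (A i) ≠ ⊤ := hunion μ ▸ measure_ne_top _ _
  have hsub := ENNReal.Tendsto.sub (tendsto_finsetSum s fun i _ ↦ hμ i) hmin (.inl hne)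
  simpa only [tsub_self, mul_zero] using ENNReal.Tendsto.const_mul hsub (.inr hR)

variable {Y : Type*} [MeasurableSpace Y] [MetricSpace Y] {r : ℝ} {y₀ : Y}

theorem tendsto_rMoment_restrict_compl {μ : Measure Y} [IsFiniteMeasure μ]
    (hμ : rMoment r y₀ μ ≠ ⊤) {A : ℕ → Set Y} (hA : ∀ i, MeasurableSet (A i))
    (hcover : ⋃ i, A i = univ) :
    Tendsto (fun n ↦ rMoment r y₀ (μ.restrict (⋃ i ∈ range (n + 1), A i)ᶜ)) atTop (𝓝 0) := by
  have hanti : Antitone fun n ↦ (⋃ i ∈ range (n + 1), A i)ᶜ := fun m n hmn ↦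
    compl_subset_compl.2 (biUnion_subset_biUnion_left (Finset.range_mono (by lia)))
  have hempty : ⋂ n, (⋃ i ∈ range (n + 1), A i)ᶜ = ∅ := by
    rw [← compl_iUnion, compl_empty_iff, eq_univ_iff_forall]
    intro y
    obtain ⟨i, hi⟩ := mem_iUnion.1 (hcover ▸ mem_univ y)
    exact mem_iUnion.2 ⟨i, mem_biUnion (Finset.self_mem_range_succ i) hi⟩
  refine tendsto_setLIntegral_zero hμ ?_
  have hlim := tendsto_measure_iInter_atTop (μ := μ)
    (fun n ↦ (Finset.measurableSet_biUnion _ fun i _ ↦ hA i).compl.nullMeasurableSet) hanti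
    ⟨0, measure_ne_top _ _⟩
  rwa [hempty, measure_empty] at hlim

variable [BorelSpace Y] {p : ProbabilityMeasure Y} {ps : ℕ → ProbabilityMeasure Y}

theorem eventually_rMoment_restrict_compl_le (hps : Tendsto ps atTop (𝓝 p))
    (hmom : Tendsto (fun n ↦ rMoment r y₀ (ps n : Measure Y)) atTop
      (𝓝 (rMoment r y₀ (p : Measure Y))))
    (hp : rMoment r y₀ (p : Measure Y) ≠ ⊤) {U : Set Y} (hU : IsOpen U) {ε : ℝ≥0∞} (hε : ε ≠ 0) :
    ∀ᶠ n in atTop, rMoment r y₀ ((ps n : Measure Y).restrict Uᶜ) ≤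
      rMoment r y₀ ((p : Measure Y).restrict Uᶜ) + ε := by
  have hlsc : LowerSemicontinuous (U.indicator fun y ↦ edist y y₀ ^ r) :=
    lowerSemicontinuous_indicator hU
      (ENNReal.continuous_rpow_const.comp (by fun_prop)).lowerSemicontinuous
  have hinner := lintegral_le_liminf_of_tendsto hps hlsc
  simp only [lintegral_indicator hU.measurableSet] at hinner
  have hsplit (q : Measure Y) : rMoment r y₀ q =
      ∫⁻ y in U, edist y y₀ ^ r ∂q + rMoment r y₀ (q.restrict Uᶜ) :=
    (lintegral_add_compl _ hU.measurableSet).symm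
  have hfin : ∫⁻ y in U, edist y y₀ ^ r ∂(p : Measure Y) ≠ ⊤ :=
    ne_top_of_le_ne_top hp (setLIntegral_le_lintegral _ _)
  have hinner' : ∀ᶠ n in atTop, ∫⁻ y in U, edist y y₀ ^ r ∂(p : Measure Y) ≤
      ∫⁻ y in U, edist y y₀ ^ r ∂(ps n : Measure Y) + ε / 2 := by
    rcases eq_or_ne (∫⁻ y in U, edist y y₀ ^ r ∂(p : Measure Y)) 0 with h₀ | h₀
    · simp only [h₀, zero_le, eventually_true]
    · have hlt := ENNReal.sub_lt_self hfin h₀ (ENNReal.half_pos hε).ne'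
      exact (eventually_lt_of_lt_liminf (hlt.trans_le hinner)).mono fun n hn ↦
        tsub_le_iff_right.1 hn.le
  have htotal := hmom.eventually_lt_const (ENNReal.lt_add_right hp (ENNReal.half_pos hε).ne')
  filter_upwards [hinner', htotal] with n hn₁ hn₂
  refine (ENNReal.add_le_add_iff_left hfin).1 ?_
  calc ∫⁻ y in U, edist y y₀ ^ r ∂(p : Measure Y) + rMoment r y₀ ((ps n : Measure Y).restrict Uᶜ)
      ≤ rMoment r y₀ (ps n : Measure Y) + ε / 2 := by
        rw [hsplit (ps n), add_right_comm]
        gcongr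
    _ ≤ rMoment r y₀ (p : Measure Y) + ε / 2 + ε / 2 := by gcongr
    _ = _ := by rw [add_assoc, ENNReal.add_halves, hsplit p, add_assoc]

theorem eventually_Wr_rpow_le [SecondCountableTopology Y] (hr : 1 ≤ r)
    (hps : Tendsto ps atTop (𝓝 p))
    (hmom : Tendsto (fun n ↦ rMoment r y₀ (ps n : Measure Y)) atTop
      (𝓝 (rMoment r y₀ (p : Measure Y))))
    (hp : rMoment r y₀ (p : Measure Y) ≠ ⊤) {ε : ℝ≥0} (hε : 0 < ε) :
    ∀ᶠ n in atTop, Wr r (ps n : Measure Y) p ^ r ≤ ε * (1 + 2 ^ r * 5) := by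
  have hr₀ : 0 < r := zero_lt_one.trans_le hr
  have hε' : (ε : ℝ≥0∞) ≠ 0 := ENNReal.coe_ne_zero.2 hε.ne'
  have : Nonempty Y := ⟨y₀⟩
  obtain ⟨A, hA, hd, hfrontier, hdiam, hopen, hbdd, hcover⟩ :=
    exists_null_frontier_cells (p : Measure Y) (δ := ε ^ r⁻¹) (by positivity)
  have hcell (i : ℕ) (y) (hy : y ∈ A i) (z) (hz : z ∈ A i) : edist y z ^ r ≤ ε :=
    edist_rpow_le_of_dist_le hr₀ (mod_cast hdiam i y hy z hz)
  obtain ⟨N, hN⟩ := ((tendsto_rMoment_restrict_compl hp hA hcover).eventually_lt_const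
    (pos_iff_ne_zero.2 hε')).exists
  set U := ⋃ i ∈ range (N + 1), A i
  obtain ⟨R, hR⟩ := (hbdd N).subset_closedBall y₀
  have hradius : ∀ i ∈ range (N + 1), ∀ y ∈ A i, edist y y₀ ^ r ≤ ENNReal.ofReal R ^ r := by
    intro i hi y hy
    refine ENNReal.rpow_le_rpow ?_ hr₀.le
    rw [edist_dist]
    exact ENNReal.ofReal_le_ofReal (hR (mem_biUnion hi hy))
  have hmass (i : ℕ) :
      Tendsto (fun n ↦ (ps n : Measure Y) (A i)) atTop (𝓝 ((p : Measure Y) (A i))) :=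
    ProbabilityMeasure.tendsto_measure_of_null_frontier_of_tendsto' hps (hfrontier i)
  have hRtop : ENNReal.ofReal R ^ r ≠ ⊤ := by finiteness
  filter_upwards [ENNReal.tendsto_nhds_zero.1 (tendsto_mul_measure_biUnion_sub (s := range (N + 1))
      hA hd hRtop hmass fun i ↦ tendsto_const_nhds) ε (pos_iff_ne_zero.2 hε'),
    ENNReal.tendsto_nhds_zero.1 (tendsto_mul_measure_biUnion_sub (s := range (N + 1))
      hA hd hRtop (fun i ↦ tendsto_const_nhds) hmass) ε (pos_iff_ne_zero.2 hε'),
    eventually_rMoment_restrict_compl_le hps hmom hp (hopen N) hε'] with n hn₁ hn₂ hn₃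
  calc Wr r (ps n : Measure Y) p ^ r
      ≤ ε + 2 ^ r * (unmatchedMoment r y₀ (ENNReal.ofReal R ^ r) (range (N + 1)) A (ps n) p +
          unmatchedMoment r y₀ (ENNReal.ofReal R ^ r) (range (N + 1)) A p (ps n)) :=
        Wr_rpow_le_unmatchedMoment hr hA hd hcell hradius
    _ ≤ ε + 2 ^ r * ((ε + (ε + ε)) + (ε + ε)) := by
        unfold unmatchedMoment
        gcongr
        exact hn₃.trans (by gcongr)
    _ = ε * (1 + 2 ^ r * 5) := by ring

theorem WrTendsto_of_tendsto [SecondCountableTopology Y] (hr : 1 ≤ r) (hps : Tendsto ps atTop (𝓝 p))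
    (hmom : Tendsto (fun n ↦ rMoment r y₀ (ps n : Measure Y)) atTop
      (𝓝 (rMoment r y₀ (p : Measure Y))))
    (hp : rMoment r y₀ (p : Measure Y) ≠ ⊤) :
    WrTendsto r (fun n ↦ (ps n : Measure Y)) p := by
  have hr₀ : 0 < r := zero_lt_one.trans_le hr
  have hrpow : Tendsto (fun n ↦ Wr r (ps n : Measure Y) p ^ r) atTop (𝓝 0) := by
    refine ENNReal.tendsto_nhds_zero.2 fun η hη ↦ ?_
    have hne : (1 + 2 ^ r * 5 : ℝ≥0∞) ≠ ⊤ := by finiteness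
    obtain ⟨ε, hε, hεη⟩ := ENNReal.exists_nnreal_pos_mul_lt hne hη.ne'
    exact (eventually_Wr_rpow_le hr hps hmom hp hε).mono fun n hn ↦ hn.trans hεη.le
  have hroot := (ENNReal.continuous_rpow_const (y := r⁻¹)).continuousAt.tendsto.comp hrpow
  simpa only [WrTendsto, Function.comp_def, ENNReal.rpow_rpow_inv hr₀.ne',
    ENNReal.zero_rpow_of_pos (inv_pos.2 hr₀)] using hroot

end WeakToWasserstein

section WassersteinToWeak

theorem Wr_eq_iInf_edist {Y : Type*} [MeasurableSpace Y] [PseudoMetricSpace Y] {r : ℝ}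
    (hr : 0 ≤ r) (p q : Measure Y) :
    Wr r p q = ⨅ π : Couplings p q, (∫⁻ z, edist z.1 z.2 ^ r ∂(π : Measure (Y × Y))) ^ (1 / r) := by
  simp only [Wr, ofReal_dist_rpow hr, iInf_subtype']

variable {Y : Type*} [MeasurableSpace Y] [MetricSpace Y] [BorelSpace Y]
  [SecondCountableTopology Y] {r : ℝ}

theorem Wr_comm (hr : 0 ≤ r) (p q : Measure Y) : Wr r p q = Wr r q p := by
  suffices h : ∀ p q : Measure Y, Wr r p q ≤ Wr r q p from (h p q).antisymm (h q p)
  intro p q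
  simp only [Wr_eq_iInf_edist hr]
  refine le_iInf fun π ↦ ?_
  have hswap : (π : Measure (Y × Y)).map Prod.swap ∈ Couplings p q := by
    refine ⟨?_, ?_⟩
    · exact (Measure.map_map measurable_fst measurable_swap).trans π.2.2
    · exact (Measure.map_map measurable_snd measurable_swap).trans π.2.1
  refine iInf_le_of_le ⟨_, hswap⟩ (le_of_eq ?_)
  rw [lintegral_map (measurable_edist.pow_const r) measurable_swap]
  simp only [Prod.fst_swap, Prod.snd_swap, edist_comm]

theorem rMoment_rpow_le_Wr_add (hr : 1 ≤ r) (y₀ : Y) (p q : Measure Y) :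
    rMoment r y₀ p ^ (1 / r) ≤ Wr r p q + rMoment r y₀ q ^ (1 / r) := by
  have hr₀ : 0 ≤ r := zero_le_one.trans hr
  rw [Wr_eq_iInf_edist hr₀, ENNReal.iInf_add]
  refine le_iInf fun ⟨π, hπ⟩ ↦ ?_
  have hfst : rMoment r y₀ p = ∫⁻ z, edist z.1 y₀ ^ r ∂π := by
    rw [rMoment, ← hπ.1, lintegral_map (measurable_edist_rpow r y₀) measurable_fst]
  have hsnd : rMoment r y₀ q = ∫⁻ z, edist z.2 y₀ ^ r ∂π := by
    rw [rMoment, ← hπ.2, lintegral_map (measurable_edist_rpow r y₀) measurable_snd]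
  rw [hfst, hsnd]
  have hminkowski := ENNReal.lintegral_Lp_add_le (μ := π) measurable_edist.aemeasurable
    ((measurable_edist_left (x := y₀)).comp measurable_snd).aemeasurable hr
  refine le_trans ?_ hminkowski
  gcongr with z
  exact edist_triangle z.1 z.2 y₀

theorem tendsto_rMoment_of_WrTendsto (hr : 1 ≤ r) (y₀ : Y) {p : Measure Y} {ps : ℕ → Measure Y}
    (h : WrTendsto r ps p) (hp : rMoment r y₀ p ≠ ⊤) :
    Tendsto (fun n ↦ rMoment r y₀ (ps n)) atTop (𝓝 (rMoment r y₀ p)) := by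
  have hr₀ : 0 < r := zero_lt_one.trans_le hr
  have hroot : Tendsto (fun n ↦ rMoment r y₀ (ps n) ^ (1 / r)) atTop
      (𝓝 (rMoment r y₀ p ^ (1 / r))) := by
    have hne : rMoment r y₀ p ^ (1 / r) ≠ ⊤ := ENNReal.rpow_ne_top_of_nonneg (by positivity) hp
    have hlow := ENNReal.Tendsto.sub (tendsto_const_nhds (x := rMoment r y₀ p ^ (1 / r))) h
      (.inl hne)
    have hup := h.add (tendsto_const_nhds (x := rMoment r y₀ p ^ (1 / r)))
    rw [tsub_zero] at hlow
    rw [zero_add] at hup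
    refine tendsto_of_tendsto_of_tendsto_of_le_of_le hlow hup (fun n ↦ ?_)
      fun n ↦ rMoment_rpow_le_Wr_add hr y₀ (ps n) p
    rw [tsub_le_iff_left, Wr_comm hr₀.le]
    exact rMoment_rpow_le_Wr_add hr y₀ p (ps n)
  have hpow := (ENNReal.continuous_rpow_const (y := r)).continuousAt.tendsto.comp hroot
  simpa only [Function.comp_def, ← ENNReal.rpow_mul, one_div_mul_cancel hr₀.ne',
    ENNReal.rpow_one] using hpow

theorem edist_integral_le_mul_lintegral_edist {π : Measure (Y × Y)} {p q : Measure Y}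
    (hπ : π ∈ Couplings p q) {f : Y → ℝ} {L : ℝ≥0} (hf : LipschitzWith L f) (hp : Integrable f p)
    (hq : Integrable f q) :
    edist (∫ y, f y ∂p) (∫ y, f y ∂q) ≤ L * ∫⁻ z, edist z.1 z.2 ∂π := by
  obtain ⟨rfl, rfl⟩ := hπ
  rw [integral_map measurable_fst.aemeasurable hp.1, integral_map measurable_snd.aemeasurable hq.1,
    edist_eq_enorm_sub, ← lintegral_const_mul _ measurable_edist]
  have hsub := integral_sub (hp.comp_measurable measurable_fst) (hq.comp_measurable measurable_snd)
  simp only [Function.comp_apply] at hsub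
  rw [← hsub]
  refine (enorm_integral_le_lintegral_enorm _).trans (lintegral_mono fun z ↦ ?_)
  exact (edist_eq_enorm_sub (f z.1) (f z.2)).symm.trans_le (hf z.1 z.2)

theorem lintegral_edist_le_rpow (hr : 1 ≤ r) (π : Measure (Y × Y)) [IsProbabilityMeasure π] :
    ∫⁻ z, edist z.1 z.2 ∂π ≤ (∫⁻ z, edist z.1 z.2 ^ r ∂π) ^ (1 / r) := by
  have hLp := eLpNorm'_le_eLpNorm'_of_exponent_le (f := fun z : Y × Y ↦ dist z.1 z.2)
    zero_lt_one hr π (measurable_fst.dist measurable_snd).aestronglyMeasurable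
  simpa only [eLpNorm', ENNReal.rpow_one, div_one, Real.enorm_eq_ofReal dist_nonneg,
    ← edist_dist] using hLp

theorem edist_integral_le_mul_Wr (hr : 1 ≤ r) {p q : Measure Y} [IsProbabilityMeasure p]
    [IsProbabilityMeasure q] {f : Y → ℝ} {L : ℝ≥0} (hf : LipschitzWith L f) (hp : Integrable f p)
    (hq : Integrable f q) : edist (∫ y, f y ∂p) (∫ y, f y ∂q) ≤ L * Wr r p q := by
  have : Nonempty (Couplings p q) :=
    nonempty_subtype.2 (exists_mem_Couplings_of_univ_eq (by simp only [measure_univ]))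
  rw [Wr_eq_iInf_edist (zero_le_one.trans hr),
    ENNReal.mul_iInf fun h ↦ absurd h ENNReal.coe_ne_top]
  refine le_iInf fun ⟨π, hπ⟩ ↦ (edist_integral_le_mul_lintegral_edist hπ hf hp hq).trans ?_
  have : IsProbabilityMeasure (π.map Prod.fst) := hπ.1.symm ▸ ‹IsProbabilityMeasure p›
  have := Measure.isProbabilityMeasure_of_map (μ := π) Prod.fst
  gcongr
  exact lintegral_edist_le_rpow hr _

theorem tendsto_of_WrTendsto (hr : 1 ≤ r) {p : ProbabilityMeasure Y}
    {ps : ℕ → ProbabilityMeasure Y} (h : WrTendsto r (fun n ↦ (ps n : Measure Y)) p) :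
    Tendsto ps atTop (𝓝 p) := by
  rw [tendsto_iff_forall_lipschitz_integral_tendsto]
  rintro f ⟨B, hB⟩ ⟨L, hL⟩
  have hInt (q : ProbabilityMeasure Y) : Integrable f (q : Measure Y) :=
    (BoundedContinuousFunction.mkOfBound ⟨f, hL.continuous⟩ B hB).integrable _
  have hbound := ENNReal.Tendsto.const_mul (a := (L : ℝ≥0∞)) h (.inr ENNReal.coe_ne_top)
  rw [mul_zero] at hbound
  rw [tendsto_iff_edist_tendsto_0]
  exact tendsto_of_tendsto_of_tendsto_of_le_of_le tendsto_const_nhds hbound (fun _ ↦ zero_le)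
    fun n ↦ edist_integral_le_mul_Wr hr hL (hInt (ps n)) (hInt p)

end WassersteinToWeak

/-! ### Jensen's inequality through the strong law of large numbers -/

section RunningMean

/-- The mean of the first `n + 1` terms of a sequence of extended nonnegative reals or of
measures. -/
def runningMean {M : Type*} [AddCommMonoid M] [SMul ℝ≥0∞ M] (u : ℕ → M) (n : ℕ) : M :=
  ((n + 1 : ℕ) : ℝ≥0∞)⁻¹ • ∑ i ∈ Finset.range (n + 1), u i

/-- The weight of the previous mean in the recursion for `runningMean`. -/
def meanWeight (n : ℕ) : ℝ≥0 := (n + 1) / (n + 2)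

theorem meanWeight_le_one (n : ℕ) : meanWeight n ≤ 1 :=
  div_le_one_of_le₀ (by gcongr; norm_num) zero_le

theorem one_sub_meanWeight (n : ℕ) : 1 - meanWeight n = ((n + 2 : ℕ) : ℝ≥0)⁻¹ := by
  refine tsub_eq_of_eq_add ?_
  rw [meanWeight]
  push_cast
  field_simp
  ring

theorem meanWeight_mul_inv (n : ℕ) :
    meanWeight n * ((n + 1 : ℕ) : ℝ≥0)⁻¹ = ((n + 2 : ℕ) : ℝ≥0)⁻¹ := by
  rw [meanWeight]
  push_cast
  field_simp

theorem runningMean_succ {M : Type*} [AddCommMonoid M] [Module ℝ≥0∞ M] (u : ℕ → M) (n : ℕ) :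
    runningMean u (n + 1) = (meanWeight n : ℝ≥0∞) • runningMean u n +
      ((1 - meanWeight n : ℝ≥0) : ℝ≥0∞) • u (n + 1) := by
  have hcoe : ∀ m : ℕ, ((m + 1 : ℕ) : ℝ≥0∞)⁻¹ = (((m + 1 : ℕ) : ℝ≥0)⁻¹ : ℝ≥0) := fun m ↦ by
    rw [ENNReal.coe_inv (by positivity), ENNReal.coe_natCast]
  rw [runningMean, runningMean, smul_smul, hcoe, hcoe, ← ENNReal.coe_mul, meanWeight_mul_inv,
    one_sub_meanWeight, ← smul_add, ← Finset.sum_range_succ]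

theorem runningMean_eq_ofReal {a : ℕ → ℝ≥0∞} (ha : ∀ i, a i ≠ ⊤) (n : ℕ) :
    runningMean a n =
      ENNReal.ofReal ((∑ i ∈ Finset.range (n + 1), (a i).toReal) / ((n + 1 : ℕ) : ℝ)) := by
  rw [ENNReal.ofReal_div_of_pos (by positivity), ENNReal.ofReal_natCast, ENNReal.div_eq_inv_mul,
    ENNReal.ofReal_sum_of_nonneg fun i _ ↦ ENNReal.toReal_nonneg]
  simp only [ENNReal.ofReal_toReal (ha _), runningMean, smul_eq_mul]

theorem EConvexOn.le_runningMean {T : Type*} [MeasurableSpace T] {S : Set (Measure T)}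
    {G : Measure T → EReal} (hG : EConvexOn S G) {q : ℕ → Measure T} (hq : ∀ n, q n ∈ S)
    (hmean : ∀ n, runningMean q n ∈ S) {a : ℕ → ℝ≥0∞} (ha : ∀ n, G (q n) ≤ a n) (n : ℕ) :
    G (runningMean q n) ≤ (runningMean a n : ℝ≥0∞) := by
  induction n with
  | zero => simpa [runningMean] using ha 0
  | succ n ih =>
    rw [runningMean_succ q, runningMean_succ a, EReal.coe_ennreal_add, smul_eq_mul, smul_eq_mul,
      EReal.coe_ennreal_mul, EReal.coe_ennreal_mul]
    refine (hG _ (hmean n) _ (hq (n + 1)) _ (meanWeight_le_one n)).trans (add_le_add ?_ ?_)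
    · exact mul_le_mul_of_nonneg_left ih (EReal.coe_ennreal_nonneg (meanWeight n))
    · exact mul_le_mul_of_nonneg_left (ha (n + 1))
        (EReal.coe_ennreal_nonneg (1 - meanWeight n : ℝ≥0))

variable {T : Type*} [MeasurableSpace T]

theorem lintegral_runningMean (q : ℕ → Measure T) (f : T → ℝ≥0∞) (n : ℕ) :
    ∫⁻ y, f y ∂runningMean q n = runningMean (fun i ↦ ∫⁻ y, f y ∂q i) n := by
  rw [runningMean, lintegral_smul_measure, lintegral_finsetSum_measure, runningMean]

theorem runningMean_apply (q : ℕ → Measure T) (A : Set T) (n : ℕ) :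
    runningMean q n A = runningMean (fun i ↦ q i A) n := by
  rw [runningMean, Measure.smul_apply, Measure.finsetSum_apply, runningMean]

theorem runningMean_const (a : ℝ≥0∞) (n : ℕ) : runningMean (fun _ ↦ a) n = a := by
  rw [runningMean, Finset.sum_const, Finset.card_range, nsmul_eq_mul, smul_eq_mul, ← mul_assoc,
    ENNReal.inv_mul_cancel (by positivity) (ENNReal.natCast_ne_top _), one_mul]

/-- The mean of the first `n + 1` terms of a sequence of probability measures. -/
def probMean (q : ℕ → ProbabilityMeasure T) (n : ℕ) : ProbabilityMeasure T :=
  ⟨runningMean (fun i ↦ (q i : Measure T)) n,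
    ⟨by simp only [runningMean_apply, measure_univ, runningMean_const]⟩⟩

end RunningMean

section StrongLaw

variable {S : Type*} [MeasurableSpace S] {Q : Measure S} [IsProbabilityMeasure Q]

theorem ae_infinitePi_forall {P : S → Prop} (hP : ∀ᵐ s ∂Q, P s) :
    ∀ᵐ ω ∂Measure.infinitePi fun _ : ℕ ↦ Q, ∀ i, P (ω i) :=
  ae_all_iff.2 fun i ↦
    (measurePreserving_eval_infinitePi (fun _ : ℕ ↦ Q) i).quasiMeasurePreserving.ae hP

theorem ae_tendsto_sum_div {h : S → ℝ} (hm : Measurable h) (hInt : Integrable h Q) :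
    ∀ᵐ ω ∂Measure.infinitePi fun _ : ℕ ↦ Q,
      Tendsto (fun n : ℕ ↦ (∑ i ∈ Finset.range n, h (ω i)) / n) atTop (𝓝 (∫ s, h s ∂Q)) := by
  have hident : ∀ i : ℕ, ProbabilityTheory.IdentDistrib (fun ω : ℕ → S ↦ h (ω i)) h
      (Measure.infinitePi fun _ : ℕ ↦ Q) Q := fun i ↦
    { aemeasurable_fst := (hm.comp (measurable_pi_apply i)).aemeasurable
      aemeasurable_snd := hm.aemeasurable
      map_eq := (Measure.map_map hm (measurable_pi_apply i)).symm.trans <|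
        congrArg (Measure.map h) (measurePreserving_eval_infinitePi (fun _ : ℕ ↦ Q) i).map_eq }
  have hlaw := ProbabilityTheory.strong_law_ae_real (μ := Measure.infinitePi fun _ : ℕ ↦ Q)
    (fun (i : ℕ) (ω : ℕ → S) ↦ h (ω i)) ((hident 0).integrable_iff.2 hInt)
    (fun i j hij ↦ (ProbabilityTheory.iIndepFun_infinitePi (X := fun (_ : ℕ) (s : S) ↦ h s)
      (P := fun _ ↦ Q) fun _ ↦ hm).indepFun hij)
    fun i ↦ (hident i).trans (hident 0).symm
  rwa [(hident 0).integral_eq] at hlaw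

theorem ae_tendsto_runningMean {h : S → ℝ≥0∞} (hm : Measurable h) (hfin : ∫⁻ s, h s ∂Q ≠ ⊤) :
    ∀ᵐ ω ∂Measure.infinitePi fun _ : ℕ ↦ Q,
      Tendsto (runningMean fun i ↦ h (ω i)) atTop (𝓝 (∫⁻ s, h s ∂Q)) := by
  filter_upwards [ae_infinitePi_forall (ae_lt_top hm hfin), ae_tendsto_sum_div hm.ennreal_toReal
    (integrable_toReal_of_lintegral_ne_top hm.aemeasurable hfin)] with ω hω hlim
  rw [integral_toReal hm.aemeasurable (ae_lt_top hm hfin)] at hlim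
  rw [← ENNReal.ofReal_toReal hfin]
  exact ((ENNReal.tendsto_ofReal hlim).comp (tendsto_add_atTop_nat 1)).congr
    fun n ↦ (runningMean_eq_ofReal (fun i ↦ (hω i).ne) n).symm

end StrongLaw

section Jensen

variable {Y : Type*} [MeasurableSpace Y] [MetricSpace Y] [SecondCountableTopology Y]
  [BorelSpace Y]

theorem ae_tendsto_probMean (Q : ProbabilityMeasure (ProbabilityMeasure Y)) :
    ∀ᵐ ω ∂Measure.infinitePi fun _ : ℕ ↦ (Q : Measure (ProbabilityMeasure Y)),
      Tendsto (probMean ω) atTop (𝓝 (probIntensity Q)) := by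
  set 𝒜 : Set (Set Y) := generateSetAlgebra (TopologicalSpace.countableBasis Y)
  have h𝒜 : ∀ A ∈ 𝒜, MeasurableSet A := fun A hA ↦ by
    have hgen := MeasurableSpace.measurableSet_generateFrom hA
    rw [generateFrom_generateSetAlgebra_eq,
      ← (TopologicalSpace.isBasis_countableBasis Y).borel_eq_generateFrom] at hgen
    rwa [BorelSpace.measurable_eq (α := Y)]
  have hlim : ∀ᵐ ω ∂Measure.infinitePi fun _ : ℕ ↦ (Q : Measure (ProbabilityMeasure Y)),
      ∀ A ∈ 𝒜, Tendsto (fun n ↦ (probMean ω n : Measure Y) A) atTop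
        (𝓝 ((probIntensity Q : Measure Y) A)) := by
    refine (ae_ball_iff
      (countable_generateSetAlgebra (TopologicalSpace.countable_countableBasis Y))).2 ?_
    intro A hA
    have hfin := probIntensity_apply Q (h𝒜 A hA) ▸ measure_ne_top (probIntensity Q : Measure Y) A
    filter_upwards [ae_tendsto_runningMean (measurable_toMeasure_apply (h𝒜 A hA)) hfin] with ω hω
    rw [probIntensity_apply Q (h𝒜 A hA)]
    exact hω.congr fun n ↦ (runningMean_apply _ A n).symm
  filter_upwards [hlim] with ω hω
  refine (isSetAlgebra_generateSetAlgebra.isSetRing.isSetSemiring.isPiSystem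
    ).tendsto_probabilityMeasure_of_tendsto_of_mem h𝒜 (fun u hu x hx ↦ ?_) ?_
  · obtain ⟨B, hB, hxB, hBu⟩ :=
      (TopologicalSpace.isBasis_countableBasis Y).exists_subset_of_mem_open hx hu
    exact ⟨B, self_subset_generateSetAlgebra hB,
      ((TopologicalSpace.isBasis_countableBasis Y).isOpen hB).mem_nhds hxB, hBu⟩
  · exact fun A hA ↦
      (ENNReal.tendsto_toNNReal (measure_ne_top (probIntensity Q : Measure Y) A)).comp (hω A hA)

theorem le_lintegral_of_EConvexOn {r : ℝ} (hr : 1 ≤ r) {y₀ : Y} {G : Measure Y → EReal}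
    (hlsc : LscWr1 r y₀ G) (hconv : EConvexOn (Pr r y₀) G) {D : ProbabilityMeasure Y → ℝ≥0∞}
    (hD : Measurable D)
    (hGD : ∀ q : ProbabilityMeasure Y, rMoment r y₀ (q : Measure Y) < ⊤ → G q ≤ D q)
    {Q : ProbabilityMeasure (ProbabilityMeasure Y)}
    (hQ : rMoment r y₀ (probIntensity Q : Measure Y) < ⊤) :
    G (probIntensity Q) ≤ (∫⁻ q, D q ∂(Q : Measure (ProbabilityMeasure Y)) : ℝ≥0∞) := by
  rcases eq_or_ne (∫⁻ q, D q ∂(Q : Measure (ProbabilityMeasure Y))) ⊤ with htop | hDfin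
  · exact htop ▸ le_top
  have hmeas : Measurable fun q : ProbabilityMeasure Y ↦ rMoment r y₀ (q : Measure Y) :=
    (measurable_rMoment r y₀).comp measurable_toMeasure
  have hmom := rMoment_probIntensity r y₀ Q
  have hfin := (hmom.symm.trans_lt hQ).ne
  obtain ⟨ω, hω, hD_lim, hmom_lim, hweak⟩ := ((ae_infinitePi_forall (ae_lt_top hmeas hfin)).and <|
    (ae_tendsto_runningMean hD hDfin).and <| (ae_tendsto_runningMean hmeas hfin).and <|
      ae_tendsto_probMean Q).exists
  have hmean : ∀ n, rMoment r y₀ (probMean ω n : Measure Y) =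
      runningMean (fun i ↦ rMoment r y₀ (ω i : Measure Y)) n := lintegral_runningMean _ _
  have hmem : ∀ {p : ProbabilityMeasure Y}, rMoment r y₀ (p : Measure Y) < ⊤ →
      (p : Measure Y) ∈ Pr r y₀ :=
    fun hp ↦ (mem_Pr_iff (zero_le_one.trans hr)).2 ⟨inferInstance, hp⟩
  have hmean_mem : ∀ n, (probMean ω n : Measure Y) ∈ Pr r y₀ := fun n ↦ hmem <| by
    rw [hmean]
    exact ENNReal.mul_lt_top (by simp) (ENNReal.sum_lt_top.2 fun i _ ↦ hω i)
  have hW : WrTendsto r (fun n ↦ (probMean ω n : Measure Y)) (probIntensity Q : Measure Y) :=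
    WrTendsto_of_tendsto hr hweak (by simpa only [hmean, hmom] using hmom_lim) hQ.ne
  refine (hlsc _ _ (hmem hQ) hmean_mem hW).trans ?_
  refine (liminf_le_liminf (.of_forall fun n ↦ hconv.le_runningMean (fun i ↦ hmem (hω i))
    hmean_mem (fun i ↦ hGD (ω i) (hω i)) n)).trans_eq ?_
  exact ((continuous_coe_ennreal_ereal.tendsto _).comp hD_lim).liminf_eq

end Jensen

/-! ### Reweighting -/

section Reweighting

theorem coe_inv_mul_coe {T : Type*} {w : T → ℝ≥0} (hw : 1 ≤ w) (y : T) :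
    ((w⁻¹ y : ℝ≥0) : ℝ≥0∞) * w y = 1 := by
  rw [← ENNReal.coe_mul, Pi.inv_apply, inv_mul_cancel₀ (zero_lt_one.trans_le (hw y)).ne',
    ENNReal.coe_one]

variable {T : Type*} [MeasurableSpace T] {h : T → ℝ≥0} {ρ : ProbabilityMeasure T}

/-- The function `h` can be normalized to a probability density with respect to `ρ`. -/
def Normalizable (h : T → ℝ≥0) (ρ : ProbabilityMeasure T) : Prop :=
  ∫⁻ y, h y ∂(ρ : Measure T) ≠ 0 ∧ ∫⁻ y, h y ∂(ρ : Measure T) ≠ ⊤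

open Classical in
/-- The probability measure whose density with respect to `ρ` is proportional to `h`; it is `ρ`
itself if `h` cannot be normalized. -/
def reweight (h : T → ℝ≥0) (ρ : ProbabilityMeasure T) : ProbabilityMeasure T :=
  if hρ : Normalizable h ρ then
    ⟨(∫⁻ y, h y ∂(ρ : Measure T))⁻¹ • (ρ : Measure T).withDensity fun y ↦ h y, ⟨by
      rw [Measure.smul_apply, withDensity_apply _ MeasurableSet.univ, Measure.restrict_univ,
        smul_eq_mul, ENNReal.inv_mul_cancel hρ.1 hρ.2]⟩⟩
  else ρ

theorem toMeasure_reweight (hρ : Normalizable h ρ) : (reweight h ρ : Measure T) =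
    (∫⁻ y, h y ∂(ρ : Measure T))⁻¹ • (ρ : Measure T).withDensity fun y ↦ h y :=
  congrArg ProbabilityMeasure.toMeasure (dif_pos hρ)

theorem reweight_apply (hρ : Normalizable h ρ) {A : Set T} (hA : MeasurableSet A) :
    (reweight h ρ : Measure T) A = (∫⁻ y, h y ∂(ρ : Measure T))⁻¹ *
      ∫⁻ y, A.indicator (fun y ↦ (h y : ℝ≥0∞)) y ∂(ρ : Measure T) := by
  rw [toMeasure_reweight hρ, Measure.smul_apply, smul_eq_mul, withDensity_apply _ hA,
    lintegral_indicator hA]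

theorem lintegral_reweight (hm : Measurable h) (hρ : Normalizable h ρ) {f : T → ℝ≥0∞}
    (hf : Measurable f) : ∫⁻ y, f y ∂(reweight h ρ : Measure T) =
      (∫⁻ y, h y ∂(ρ : Measure T))⁻¹ * ∫⁻ y, h y * f y ∂(ρ : Measure T) := by
  rw [toMeasure_reweight hρ, lintegral_smul_measure,
    lintegral_withDensity_eq_lintegral_mul _ hm.coe_nnreal_ennreal hf, smul_eq_mul]
  rfl

theorem measurable_reweight (hm : Measurable h) : Measurable (reweight h) := by
  classical
  have hmass := measurable_lintegral_probabilityMeasure hm.coe_nnreal_ennreal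
  have hdom : MeasurableSet {ρ | Normalizable h ρ} :=
    (hmass (measurableSet_singleton 0).compl).inter (hmass (measurableSet_singleton ⊤).compl)
  refine measurable_probabilityMeasure_iff.2 fun A hA ↦ ?_
  have hpiece : (fun ρ ↦ (reweight h ρ : Measure T) A) = fun ρ : ProbabilityMeasure T ↦
      if Normalizable h ρ then (∫⁻ y, h y ∂(ρ : Measure T))⁻¹ *
        ∫⁻ y, A.indicator (fun y ↦ (h y : ℝ≥0∞)) y ∂(ρ : Measure T)
      else (ρ : Measure T) A := by
    funext ρ
    split_ifs with hρ
    · exact reweight_apply hρ hA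
    · exact congrArg (fun μ : ProbabilityMeasure T ↦ (μ : Measure T) A) (dif_neg hρ)
  rw [hpiece]
  exact Measurable.ite hdom (hmass.inv.mul <| measurable_lintegral_probabilityMeasure <|
    hm.coe_nnreal_ennreal.indicator hA) (measurable_toMeasure_apply hA)

theorem one_le_lintegral_coe {w : T → ℝ≥0} (hw : 1 ≤ w) (p : Measure T) [IsProbabilityMeasure p] :
    1 ≤ ∫⁻ y, w y ∂p :=
  calc (1 : ℝ≥0∞) = ∫⁻ _, 1 ∂p := by rw [lintegral_one, measure_univ]
    _ ≤ ∫⁻ y, w y ∂p := lintegral_mono fun y ↦ ENNReal.one_le_coe_iff.2 (hw y)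

theorem Normalizable.of_one_le {w : T → ℝ≥0} (hw : 1 ≤ w)
    (hfin : ∫⁻ y, w y ∂(ρ : Measure T) ≠ ⊤) : Normalizable w ρ :=
  ⟨(zero_lt_one.trans_le (one_le_lintegral_coe hw _)).ne', hfin⟩

theorem normalizable_inv {w : T → ℝ≥0} (hm : Measurable w) (hw : 1 ≤ w)
    (ρ : ProbabilityMeasure T) : Normalizable w⁻¹ ρ := by
  constructor
  · rw [Ne, lintegral_eq_zero_iff hm.inv.coe_nnreal_ennreal]
    intro hzero
    obtain ⟨y, hy⟩ := hzero.exists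
    have hone := coe_inv_mul_coe hw y
    rw [show ((w⁻¹ y : ℝ≥0) : ℝ≥0∞) = 0 from hy, zero_mul] at hone
    exact zero_ne_one hone
  · have hle : ∫⁻ y, (w⁻¹ y : ℝ≥0) ∂(ρ : Measure T) ≤ ∫⁻ _, 1 ∂(ρ : Measure T) :=
      lintegral_mono fun y ↦ ENNReal.coe_le_one_iff.2 (inv_le_one_of_one_le₀ (hw y))
    exact ne_top_of_le_ne_top (by simp) hle

theorem lintegral_reweight_inv {w : T → ℝ≥0} (hm : Measurable w) (hw : 1 ≤ w)
    (ρ : ProbabilityMeasure T) :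
    ∫⁻ y, w y ∂(reweight w⁻¹ ρ : Measure T) = (∫⁻ y, (w⁻¹ y : ℝ≥0) ∂(ρ : Measure T))⁻¹ := by
  rw [lintegral_reweight hm.inv (normalizable_inv hm hw ρ) hm.coe_nnreal_ennreal]
  simp only [coe_inv_mul_coe hw, lintegral_const, measure_univ, mul_one]

theorem reweight_inv_reweight {w : T → ℝ≥0} (hm : Measurable w) (hw : 1 ≤ w)
    (hρ : Normalizable w ρ) : reweight w⁻¹ (reweight w ρ) = ρ := by
  have hcancel (y : T) : (w y : ℝ≥0∞) * (w⁻¹ y : ℝ≥0) = 1 :=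
    (mul_comm _ _).trans (coe_inv_mul_coe hw y)
  have hmass : ∫⁻ y, (w⁻¹ y : ℝ≥0) ∂(reweight w ρ : Measure T) =
      (∫⁻ y, w y ∂(ρ : Measure T))⁻¹ := by
    rw [lintegral_reweight hm hρ hm.inv.coe_nnreal_ennreal]
    simp only [hcancel, lintegral_const, measure_univ, mul_one]
  refine ProbabilityMeasure.toMeasure_injective (Measure.ext fun A hA ↦ ?_)
  rw [reweight_apply (normalizable_inv hm hw _) hA, hmass, inv_inv,
    lintegral_reweight hm hρ (hm.inv.coe_nnreal_ennreal.indicator hA), ← mul_assoc,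
    ENNReal.mul_inv_cancel hρ.1 hρ.2, one_mul, ← lintegral_indicator_one hA]
  refine lintegral_congr fun y ↦ ?_
  by_cases hy : y ∈ A
  · rw [indicator_of_mem hy, indicator_of_mem hy, hcancel, Pi.one_apply]
  · rw [indicator_of_notMem hy, indicator_of_notMem hy, mul_zero]

theorem probIntensity_map_reweight_le {w : T → ℝ≥0} (hm : Measurable w) (hw : 1 ≤ w)
    {Q : ProbabilityMeasure (ProbabilityMeasure T)}
    (hQ : ∫⁻ y, w y ∂(probIntensity Q : Measure T) ≠ ⊤) :
    (probIntensity (Q.map (measurable_reweight hm).aemeasurable) : Measure T) ≤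
      (∫⁻ y, w y ∂(probIntensity Q : Measure T)) • (reweight w (probIntensity Q) : Measure T) := by
  have hfin : ∀ᵐ q : ProbabilityMeasure T ∂(Q : Measure _), ∫⁻ y, w y ∂(q : Measure T) < ⊤ :=
    ae_lt_top (measurable_lintegral_probabilityMeasure hm.coe_nnreal_ennreal)
      (by rwa [← lintegral_probIntensity Q hm.coe_nnreal_ennreal])
  have hI := Normalizable.of_one_le hw hQ
  refine Measure.le_iff.2 fun A hA ↦ ?_
  have hmap : (probIntensity (Q.map (measurable_reweight hm).aemeasurable) : Measure T) A =
      ∫⁻ q, (reweight w q : Measure T) A ∂(Q : Measure (ProbabilityMeasure T)) :=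
    (probIntensity_apply _ hA).trans
      (lintegral_map (measurable_toMeasure_apply hA) (measurable_reweight hm))
  rw [Measure.smul_apply, smul_eq_mul, reweight_apply hI hA, ← mul_assoc,
    ENNReal.mul_inv_cancel hI.1 hI.2, one_mul,
    lintegral_probIntensity Q (hm.coe_nnreal_ennreal.indicator hA), hmap]
  refine lintegral_mono_ae (hfin.mono fun q hq ↦ ?_)
  have hq' : Normalizable w q := .of_one_le hw hq.ne
  rw [reweight_apply hq' hA]
  exact mul_le_of_le_one_left' (ENNReal.inv_le_one.2 (one_le_lintegral_coe hw _))

end Reweighting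

section ReweightingLimits

variable {T : Type*} [TopologicalSpace T] [MeasurableSpace T] [OpensMeasurableSpace T]
  {ρ : ProbabilityMeasure T} {ρs : ℕ → ProbabilityMeasure T}

theorem tendsto_lintegral_inv {w : T → ℝ≥0} (hc : Continuous w) (hw : 1 ≤ w)
    (hρs : Tendsto ρs atTop (𝓝 ρ)) :
    Tendsto (fun n ↦ ∫⁻ y, (w⁻¹ y : ℝ≥0) ∂(ρs n : Measure T)) atTop
      (𝓝 (∫⁻ y, (w⁻¹ y : ℝ≥0) ∂(ρ : Measure T))) := by
  have hpos (y : T) : w y ≠ 0 := (zero_lt_one.trans_le (hw y)).ne'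
  have hbdd (y z : T) : dist (w⁻¹ y) (w⁻¹ z) ≤ 1 := by
    have hle (t : T) : (w⁻¹ t : ℝ) ≤ 1 := mod_cast inv_le_one_of_one_le₀ (hw t)
    rw [NNReal.dist_eq]
    exact abs_sub_le_of_le_of_le (w⁻¹ y).2 (hle y) (w⁻¹ z).2 (hle z) |>.trans_eq (sub_zero 1)
  exact ProbabilityMeasure.tendsto_iff_forall_lintegral_tendsto.1 hρs
    (BoundedContinuousFunction.mkOfBound ⟨w⁻¹, hc.inv₀ hpos⟩ 1 hbdd)

variable [HasOuterApproxClosed T] [BorelSpace T]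

theorem tendsto_reweight {h : T → ℝ≥0} (hc : Continuous h) (hρs : Tendsto ρs atTop (𝓝 ρ))
    (hρ : Normalizable h ρ) (hρsn : ∀ n, Normalizable h (ρs n))
    (hmass : Tendsto (fun n ↦ ∫⁻ y, h y ∂(ρs n : Measure T)) atTop
      (𝓝 (∫⁻ y, h y ∂(ρ : Measure T)))) :
    Tendsto (fun n ↦ reweight h (ρs n)) atTop (𝓝 (reweight h ρ)) := by
  refine tendsto_of_forall_isOpen_le_liminf' fun G hG ↦ ?_
  have hlsc := lintegral_le_liminf_of_tendsto hρs
    (lowerSemicontinuous_indicator hG (ENNReal.continuous_coe.comp hc).lowerSemicontinuous)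
  simp only [reweight_apply hρ hG.measurableSet, reweight_apply (hρsn _) hG.measurableSet]
  refine le_trans ?_ ENNReal.le_liminf_mul
  rw [(tendsto_inv_iff.2 hmass).liminf_eq]
  exact mul_le_mul_right hlsc _

theorem tendsto_reweight_inv {w : T → ℝ≥0} (hc : Continuous w) (hw : 1 ≤ w)
    (hρs : Tendsto ρs atTop (𝓝 ρ)) :
    Tendsto (fun n ↦ reweight w⁻¹ (ρs n)) atTop (𝓝 (reweight w⁻¹ ρ)) := by
  have hpos (y : T) : w y ≠ 0 := (zero_lt_one.trans_le (hw y)).ne'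
  exact tendsto_reweight (hc.inv₀ hpos) hρs (normalizable_inv hc.measurable hw ρ)
    (fun n ↦ normalizable_inv hc.measurable hw (ρs n)) (tendsto_lintegral_inv hc hw hρs)

end ReweightingLimits

section MomentWeight

variable {Y : Type*} [MetricSpace Y] {r : ℝ} {y₀ : Y}

/-- The weight `1 + d(y, y₀)^r`. Reweighting by it turns Wasserstein convergence on `𝒫_r` into
weak convergence. -/
def momentWeight (r : ℝ) (y₀ : Y) (y : Y) : ℝ≥0 := 1 + nndist y y₀ ^ r

theorem continuous_momentWeight (hr : 0 ≤ r) (y₀ : Y) : Continuous (momentWeight r y₀) :=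
  continuous_const.add <|
    (NNReal.continuous_rpow_const hr).comp (continuous_id.nndist continuous_const)

theorem one_le_momentWeight (r : ℝ) (y₀ : Y) : 1 ≤ momentWeight r y₀ :=
  fun _ ↦ le_self_add

variable [MeasurableSpace Y]

theorem lintegral_momentWeight (hr : 0 ≤ r) (y₀ : Y) (p : Measure Y) [IsProbabilityMeasure p] :
    ∫⁻ y, momentWeight r y₀ y ∂p = 1 + rMoment r y₀ p := by
  simp only [momentWeight, ENNReal.coe_add, ENNReal.coe_one, ENNReal.coe_rpow_of_nonneg _ hr]
  rw [lintegral_add_left measurable_const, lintegral_one, measure_univ, rMoment]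
  simp only [edist_nndist]

theorem normalizable_momentWeight (hr : 0 ≤ r) {p : ProbabilityMeasure Y}
    (hp : rMoment r y₀ (p : Measure Y) < ⊤) : Normalizable (momentWeight r y₀) p := by
  refine .of_one_le (one_le_momentWeight r y₀) ?_
  rw [lintegral_momentWeight hr]
  exact ENNReal.add_ne_top.2 ⟨ENNReal.one_ne_top, hp.ne⟩

variable [BorelSpace Y]

theorem one_add_rMoment_reweight_inv (hr : 0 ≤ r) (y₀ : Y) (ρ : ProbabilityMeasure Y) :
    1 + rMoment r y₀ (reweight (momentWeight r y₀)⁻¹ ρ : Measure Y) =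
      (∫⁻ y, ((momentWeight r y₀)⁻¹ y : ℝ≥0) ∂(ρ : Measure Y))⁻¹ := by
  rw [← lintegral_momentWeight hr, lintegral_reweight_inv
    (continuous_momentWeight hr y₀).measurable (one_le_momentWeight r y₀)]

theorem rMoment_reweight_inv_lt_top (hr : 0 ≤ r) (y₀ : Y) (ρ : ProbabilityMeasure Y) :
    rMoment r y₀ (reweight (momentWeight r y₀)⁻¹ ρ : Measure Y) < ⊤ := by
  refine (le_add_self (b := (1 : ℝ≥0∞))).trans_lt ?_
  rw [one_add_rMoment_reweight_inv hr]
  exact (ENNReal.inv_ne_top.2 (normalizable_inv (continuous_momentWeight hr y₀).measurable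
    (one_le_momentWeight r y₀) ρ).1).lt_top

theorem WrTendsto_reweight_inv [SecondCountableTopology Y] (hr : 1 ≤ r) (y₀ : Y)
    {ρ : ProbabilityMeasure Y} {ρs : ℕ → ProbabilityMeasure Y} (hρs : Tendsto ρs atTop (𝓝 ρ)) :
    WrTendsto r (fun n ↦ (reweight (momentWeight r y₀)⁻¹ (ρs n) : Measure Y))
      (reweight (momentWeight r y₀)⁻¹ ρ : Measure Y) := by
  have hr₀ : 0 ≤ r := zero_le_one.trans hr
  have hcont := continuous_momentWeight hr₀ y₀
  have hone := one_le_momentWeight r y₀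
  refine WrTendsto_of_tendsto hr (tendsto_reweight_inv hcont hone hρs) ?_
    (rMoment_reweight_inv_lt_top hr₀ y₀ ρ).ne
  have hmass := tendsto_inv_iff.2 (tendsto_lintegral_inv hcont hone hρs)
  simp only [← one_add_rMoment_reweight_inv hr₀] at hmass
  simpa only [ENNReal.add_sub_cancel_left ENNReal.one_ne_top] using
    ENNReal.Tendsto.sub hmass (tendsto_const_nhds (x := (1 : ℝ≥0∞))) (.inr ENNReal.one_ne_top)

theorem tendsto_reweight_of_WrTendsto [SecondCountableTopology Y] (hr : 1 ≤ r)
    {p : ProbabilityMeasure Y} {ps : ℕ → ProbabilityMeasure Y}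
    (hp : rMoment r y₀ (p : Measure Y) < ⊤) (hps : ∀ n, rMoment r y₀ (ps n : Measure Y) < ⊤)
    (h : WrTendsto r (fun n ↦ (ps n : Measure Y)) p) :
    Tendsto (fun n ↦ reweight (momentWeight r y₀) (ps n)) atTop
      (𝓝 (reweight (momentWeight r y₀) p)) := by
  have hr₀ : 0 ≤ r := zero_le_one.trans hr
  refine tendsto_reweight (continuous_momentWeight hr₀ y₀) (tendsto_of_WrTendsto hr h)
    (normalizable_momentWeight hr₀ hp) (fun n ↦ normalizable_momentWeight hr₀ (hps n)) ?_
  simp only [lintegral_momentWeight hr₀]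
  exact (tendsto_rMoment_of_WrTendsto hr y₀ h hp.ne).const_add 1

theorem measurable_reweight_momentWeight (hr : 0 ≤ r) (y₀ : Y) :
    Measurable (reweight (momentWeight r y₀)) :=
  measurable_reweight (continuous_momentWeight hr y₀).measurable

theorem ae_reweight_inv_reweight (hr : 0 ≤ r) {Q : ProbabilityMeasure (ProbabilityMeasure Y)}
    (hQ : rMoment r y₀ (probIntensity Q : Measure Y) < ⊤) :
    ∀ᵐ q : ProbabilityMeasure Y ∂(Q : Measure _),
      reweight (momentWeight r y₀)⁻¹ (reweight (momentWeight r y₀) q) = q := by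
  have hfin : ∀ᵐ q : ProbabilityMeasure Y ∂(Q : Measure _), rMoment r y₀ (q : Measure Y) < ⊤ :=
    ae_lt_top ((measurable_rMoment r y₀).comp measurable_toMeasure)
      (rMoment_probIntensity r y₀ Q ▸ hQ.ne)
  exact hfin.mono fun q hq ↦ reweight_inv_reweight (continuous_momentWeight hr y₀).measurable
    (one_le_momentWeight r y₀) (normalizable_momentWeight hr hq)

theorem lintegral_map_reweight_le (hr : 0 ≤ r) (D : ProbabilityMeasure Y → ℝ≥0∞)
    {Q : ProbabilityMeasure (ProbabilityMeasure Y)}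
    (hQ : rMoment r y₀ (probIntensity Q : Measure Y) < ⊤) :
    ∫⁻ ρ, D (reweight (momentWeight r y₀)⁻¹ ρ) ∂(Q.map
      (measurable_reweight_momentWeight hr y₀).aemeasurable : Measure (ProbabilityMeasure Y)) ≤
      ∫⁻ q, D q ∂(Q : Measure (ProbabilityMeasure Y)) := by
  refine (lintegral_map_le _ _).trans_eq (lintegral_congr_ae ?_)
  filter_upwards [ae_reweight_inv_reweight hr hQ] with q hq
  rw [hq]

end MomentWeight

/-! ### Compactness -/

section Tightness

theorem isTightMeasureSet_of_le_smul {T : Type*} [TopologicalSpace T] [MeasurableSpace T]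
    {S S' : Set (Measure T)} {c : ℝ≥0∞} (hc : c ≠ ⊤) (hS : IsTightMeasureSet S)
    (hle : ∀ μ ∈ S', ∃ ν ∈ S, μ ≤ c • ν) : IsTightMeasureSet S' := by
  rw [isTightMeasureSet_iff_exists_isCompact_measure_compl_le] at hS ⊢
  intro ε hε
  obtain ⟨K, hK, hSK⟩ := hS (ε / c) (ENNReal.div_pos hε.ne' hc)
  refine ⟨K, hK, fun μ hμ ↦ ?_⟩
  obtain ⟨ν, hν, hμν⟩ := hle μ hμ
  calc μ Kᶜ ≤ c * ν Kᶜ := hμν Kᶜ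
    _ ≤ c * (ε / c) := mul_le_mul_right (hSK ν hν) c
    _ ≤ ε := ENNReal.mul_div_le

variable {Y : Type*} [MeasurableSpace Y]

theorem measure_setOf_lt_compl_le (Q : ProbabilityMeasure (ProbabilityMeasure Y)) {K : Set Y}
    (hK : MeasurableSet K) {u : ℝ≥0} (hu : u ≠ 0) :
    (Q : Measure (ProbabilityMeasure Y)) {q | q Kᶜ ≤ u}ᶜ ≤
      (probIntensity Q : Measure Y) Kᶜ / u := by
  rw [probIntensity_apply Q hK.compl]
  refine le_trans (measure_mono fun q hq ↦ ?_) (meas_ge_le_lintegral_div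
    (measurable_toMeasure_apply hK.compl).aemeasurable (ENNReal.coe_ne_zero.2 hu)
    ENNReal.coe_ne_top)
  rw [mem_ofPred_eq, ← ProbabilityMeasure.ennreal_coeFn_eq_coeFn_toMeasure, ENNReal.coe_le_coe]
  exact (not_le.1 fun hle ↦ hq hle).le

theorem isTightMeasureSet_of_probIntensity [TopologicalSpace Y] [T2Space Y] [NormalSpace Y]
    [BorelSpace Y] {S : Set (ProbabilityMeasure (ProbabilityMeasure Y))}
    (hS : IsTightMeasureSet {(probIntensity Q : Measure Y) | Q ∈ S}) :
    IsTightMeasureSet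
      {((Q : ProbabilityMeasure (ProbabilityMeasure Y)) : Measure (ProbabilityMeasure Y)) |
        Q ∈ S} := by
  rw [isTightMeasureSet_iff_exists_isCompact_measure_compl_le] at hS ⊢
  intro ε hε
  obtain ⟨δ, hδ, hδε⟩ := ENNReal.exists_pos_sum_of_countable' hε.ne' ℕ
  obtain ⟨u, -, hu, hu₀⟩ := exists_seq_strictAnti_tendsto (0 : ℝ≥0)
  have hu' (m : ℕ) : (u m : ℝ≥0∞) ≠ 0 := ENNReal.coe_ne_zero.2 (hu m).ne'
  choose K hK hSK using fun m ↦ hS (δ m * u m) (ENNReal.mul_pos (hδ m).ne' (hu' m))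
  refine ⟨_, isCompact_setOfPred_probabilityMeasure_mass_eq_compl_isCompact_le hu₀ hK
    (.inl inferInstance), ?_⟩
  rintro _ ⟨Q, hQ, rfl⟩
  have hcompl : {q : ProbabilityMeasure Y | ∀ m, q (K m)ᶜ ≤ u m}ᶜ =
      ⋃ m, {q : ProbabilityMeasure Y | q (K m)ᶜ ≤ u m}ᶜ := by
    ext q
    simp only [mem_compl_iff, mem_ofPred_eq, not_forall, mem_iUnion]
  calc (Q : Measure (ProbabilityMeasure Y)) {q | ∀ m, q (K m)ᶜ ≤ u m}ᶜ
    _ ≤ ∑' m, (Q : Measure (ProbabilityMeasure Y)) {q | q (K m)ᶜ ≤ u m}ᶜ :=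
      hcompl ▸ measure_iUnion_le _
    _ ≤ ∑' m, δ m := ENNReal.tsum_le_tsum fun m ↦
      (measure_setOf_lt_compl_le Q (hK m).measurableSet (hu m).ne').trans <|
        ENNReal.div_le_of_le_mul (hSK m _ ⟨Q, hQ, rfl⟩)
    _ ≤ ε := hδε.le

end Tightness

section Compactness

variable {Y : Type*} [MeasurableSpace Y] [MetricSpace Y] [BorelSpace Y]

theorem lowerSemicontinuous_toMeasure_apply {G : Set Y} (hG : IsOpen G) :
    LowerSemicontinuous fun q : ProbabilityMeasure Y ↦ (q : Measure Y) G :=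
  lowerSemicontinuous_iff_isOpen_preimage.2 (isOpen_setOf_lt_measure hG)

variable [SecondCountableTopology Y]

theorem tendsto_probIntensity {Q : ProbabilityMeasure (ProbabilityMeasure Y)}
    {Qs : ℕ → ProbabilityMeasure (ProbabilityMeasure Y)} (hQs : Tendsto Qs atTop (𝓝 Q)) :
    Tendsto (fun n ↦ probIntensity (Qs n)) atTop (𝓝 (probIntensity Q)) := by
  refine tendsto_of_forall_isOpen_le_liminf' fun G hG ↦ ?_
  simp only [probIntensity_apply _ hG.measurableSet]
  exact lintegral_le_liminf_of_tendsto hQs (lowerSemicontinuous_toMeasure_apply hG)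

theorem exists_subseq_tendsto_of_probIntensity_le [CompleteSpace Y]
    {Qs : ℕ → ProbabilityMeasure (ProbabilityMeasure Y)} {ps : ℕ → ProbabilityMeasure Y}
    {p : ProbabilityMeasure Y} (hps : Tendsto ps atTop (𝓝 p)) {c : ℝ≥0∞} (hc : c ≠ ⊤)
    (hle : ∀ n, (probIntensity (Qs n) : Measure Y) ≤ c • (ps n : Measure Y)) :
    ∃ Q, ∃ φ : ℕ → ℕ, StrictMono φ ∧ Tendsto (Qs ∘ φ) atTop (𝓝 Q) := by
  have hcompact : IsCompact (closure (range ps)) :=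
    hps.isCompact_insert_range.closure_of_subset (subset_insert _ _)
  have htight : IsTightMeasureSet {(probIntensity Q : Measure Y) | Q ∈ range Qs} := by
    refine isTightMeasureSet_of_le_smul hc (isTightMeasureSet_of_isCompact_closure hcompact) ?_
    rintro _ ⟨_, ⟨n, rfl⟩, rfl⟩
    exact ⟨ps n, ⟨ps n, ⟨n, rfl⟩, rfl⟩, hle n⟩
  obtain ⟨Q, -, φ, hφ, hQ⟩ := (isCompact_closure_of_isTightMeasureSet
    (isTightMeasureSet_of_probIntensity htight)).tendsto_subseq
    (x := Qs) fun n ↦ subset_closure ⟨n, rfl⟩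
  exact ⟨Q, φ, hφ, hQ⟩

end Compactness

section RelaxationLimits

variable {Y : Type*} [MeasurableSpace Y] [MetricSpace Y] [SecondCountableTopology Y]
  [BorelSpace Y] {r : ℝ} {y₀ : Y}

/-- Sequential lower semicontinuity on `𝒫_r` for the distance `𝒲_r`, for functionals defined on
all probability measures with values in `ℝ≥0∞`. -/
def WrLowerSemicontinuous (r : ℝ) (y₀ : Y) (D : ProbabilityMeasure Y → ℝ≥0∞) : Prop :=
  ∀ (p : ProbabilityMeasure Y) (ps : ℕ → ProbabilityMeasure Y), rMoment r y₀ (p : Measure Y) < ⊤ →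
    (∀ n, rMoment r y₀ (ps n : Measure Y) < ⊤) → WrTendsto r (fun n ↦ (ps n : Measure Y)) p →
      D p ≤ liminf (fun n ↦ D (ps n)) atTop

theorem continuous_reweight_inv (hr : 0 ≤ r) (y₀ : Y) :
    Continuous (reweight (momentWeight r y₀)⁻¹) :=
  continuous_iff_seqContinuous.2 fun _ _ h ↦
    tendsto_reweight_inv (continuous_momentWeight hr y₀) (one_le_momentWeight r y₀) h

theorem WrLowerSemicontinuous.comp_reweight_inv (hr : 1 ≤ r) {D : ProbabilityMeasure Y → ℝ≥0∞}
    (hD : WrLowerSemicontinuous r y₀ D) :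
    LowerSemicontinuous fun ρ ↦ D (reweight (momentWeight r y₀)⁻¹ ρ) := by
  have hr₀ : 0 ≤ r := zero_le_one.trans hr
  refine lowerSemicontinuous_iff_isClosed_preimage.2 fun c ↦ IsSeqClosed.isClosed ?_
  intro ρs ρ hρs hlim
  calc D (reweight (momentWeight r y₀)⁻¹ ρ)
    _ ≤ liminf (fun n ↦ D (reweight (momentWeight r y₀)⁻¹ (ρs n))) atTop :=
      hD _ _ (rMoment_reweight_inv_lt_top hr₀ y₀ ρ)
        (fun n ↦ rMoment_reweight_inv_lt_top hr₀ y₀ (ρs n)) (WrTendsto_reweight_inv hr y₀ hlim)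
    _ ≤ liminf (fun _ ↦ c) atTop := liminf_le_liminf (.of_forall hρs)
    _ = c := liminf_const c

theorem map_reweight_inv_map_reweight (hr : 0 ≤ r) {Q : ProbabilityMeasure (ProbabilityMeasure Y)}
    (hQ : rMoment r y₀ (probIntensity Q : Measure Y) < ⊤) :
    (Q.map (measurable_reweight_momentWeight hr y₀).aemeasurable).map
      (continuous_reweight_inv hr y₀).measurable.aemeasurable = Q := by
  refine ProbabilityMeasure.toMeasure_injective ?_
  change ((Q : Measure (ProbabilityMeasure Y)).map _).map _ = _
  rw [Measure.map_map (continuous_reweight_inv hr y₀).measurable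
    (measurable_reweight_momentWeight hr y₀)]
  exact (Measure.map_congr (ae_reweight_inv_reweight hr hQ)).trans Measure.map_id

variable [CompleteSpace Y]

theorem exists_subseq_tendsto_map_reweight (hr : 1 ≤ r)
    {Qs : ℕ → ProbabilityMeasure (ProbabilityMeasure Y)} {p : ProbabilityMeasure Y} {M : ℝ≥0∞}
    (hM : M ≠ ⊤) (hp : rMoment r y₀ (p : Measure Y) < ⊤)
    (hQs : ∀ n, rMoment r y₀ (probIntensity (Qs n) : Measure Y) ≤ M)
    (hlim : WrTendsto r (fun n ↦ (probIntensity (Qs n) : Measure Y)) p) :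
    ∃ Q, ∃ φ : ℕ → ℕ, StrictMono φ ∧ Tendsto (fun n ↦ (Qs (φ n)).map
      (measurable_reweight_momentWeight (zero_le_one.trans hr) y₀).aemeasurable) atTop (𝓝 Q) := by
  have hr₀ : 0 ≤ r := zero_le_one.trans hr
  have hmom (n : ℕ) : rMoment r y₀ (probIntensity (Qs n) : Measure Y) < ⊤ :=
    (hQs n).trans_lt hM.lt_top
  refine exists_subseq_tendsto_of_probIntensity_le
    (Qs := fun n ↦ (Qs n).map (measurable_reweight_momentWeight hr₀ y₀).aemeasurable)
    (tendsto_reweight_of_WrTendsto hr hp hmom hlim) (c := 1 + M)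
    (ENNReal.add_ne_top.2 ⟨ENNReal.one_ne_top, hM⟩) fun n ↦ ?_
  have hmass : ∫⁻ y, momentWeight r y₀ y ∂(probIntensity (Qs n) : Measure Y) ≤ 1 + M := by
    rw [lintegral_momentWeight hr₀]
    exact add_le_add_right (hQs n) 1
  refine (probIntensity_map_reweight_le (continuous_momentWeight hr₀ y₀).measurable
    (one_le_momentWeight r y₀) (hmass.trans_lt ?_).ne).trans fun A ↦ ?_
  · exact (ENNReal.add_ne_top.2 ⟨ENNReal.one_ne_top, hM⟩).lt_top
  · exact mul_le_mul_left hmass _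

theorem relaxation_le_of_WrTendsto (hr : 1 ≤ r) {D : ProbabilityMeasure Y → ℝ≥0∞}
    (hD : WrLowerSemicontinuous r y₀ D) {Qs : ℕ → ProbabilityMeasure (ProbabilityMeasure Y)}
    {p : ProbabilityMeasure Y} {M c : ℝ≥0∞} (hM : M ≠ ⊤) (hp : rMoment r y₀ (p : Measure Y) < ⊤)
    (hQs : ∀ n, rMoment r y₀ (probIntensity (Qs n) : Measure Y) ≤ M)
    (hlim : WrTendsto r (fun n ↦ (probIntensity (Qs n) : Measure Y)) p)
    (hc : ∀ n, ∫⁻ q, D q ∂(Qs n : Measure (ProbabilityMeasure Y)) ≤ c) : relaxation D p ≤ c := by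
  have hr₀ : 0 ≤ r := zero_le_one.trans hr
  have hS := continuous_reweight_inv hr₀ y₀
  obtain ⟨ρ, φ, hφ, hρ⟩ := exists_subseq_tendsto_map_reweight hr hM hp hQs hlim
  have hback := ProbabilityMeasure.tendsto_map_of_tendsto_of_continuous _ _ hρ hS
  simp only [map_reweight_inv_map_reweight hr₀ ((hQs _).trans_lt hM.lt_top)] at hback
  have hI : probIntensity (ρ.map hS.measurable.aemeasurable) = p :=
    tendsto_nhds_unique (tendsto_probIntensity hback)
      ((tendsto_of_WrTendsto hr hlim).comp hφ.tendsto_atTop)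
  have hle (n : ℕ) := (lintegral_map_reweight_le hr₀ D ((hQs (φ n)).trans_lt hM.lt_top)).trans
    (hc (φ n))
  calc relaxation D p ≤ ∫⁻ q, D q ∂(ρ.map hS.measurable.aemeasurable : Measure _) :=
        hI ▸ relaxation_probIntensity_le_lintegral D _
    _ ≤ ∫⁻ q, D (reweight (momentWeight r y₀)⁻¹ q) ∂(ρ : Measure (ProbabilityMeasure Y)) :=
      lintegral_map_le _ _
    _ ≤ liminf (fun _ ↦ c) atTop :=
      (lintegral_le_liminf_of_tendsto hρ (hD.comp_reweight_inv hr)).trans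
        (liminf_le_liminf (.of_forall hle))
    _ = c := liminf_const c

theorem WrLowerSemicontinuous.relaxation (hr : 1 ≤ r) {D : ProbabilityMeasure Y → ℝ≥0∞}
    (hD : WrLowerSemicontinuous r y₀ D) : WrLowerSemicontinuous r y₀ (relaxation D) := by
  intro p ps hp _ hlim
  refine le_of_forall_gt_imp_ge_of_dense fun c hc ↦ ?_
  have hlt : ∃ᶠ n in atTop, WOT.relaxation D (ps n) < c :=
    frequently_lt_of_liminf_lt (by isBoundedDefault) hc
  have hmom : ∀ᶠ n in atTop, rMoment r y₀ (ps n : Measure Y) < rMoment r y₀ (p : Measure Y) + 1 :=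
    (tendsto_rMoment_of_WrTendsto hr y₀ hlim hp.ne).eventually_lt_const
      (ENNReal.lt_add_right hp.ne one_ne_zero)
  obtain ⟨φ, hφ, hφn⟩ := extraction_of_frequently_atTop (hlt.and_eventually hmom)
  have hexists (n : ℕ) : ∃ Q, probIntensity Q = ps (φ n) ∧
      ∫⁻ q, D q ∂(Q : Measure (ProbabilityMeasure Y)) < c := by
    simpa only [WOT.relaxation, iInf_lt_iff, exists_prop] using (hφn n).1
  choose Qs hQs hQsc using hexists
  refine relaxation_le_of_WrTendsto hr hD (Qs := Qs)
    (ENNReal.add_ne_top.2 ⟨hp.ne, ENNReal.one_ne_top⟩) hp (fun n ↦ ?_) ?_ fun n ↦ (hQsc n).le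
  · rw [hQs]
    exact (hφn n).2.le
  · simp only [hQs]
    exact hlim.comp hφ.tendsto_atTop

end RelaxationLimits

/-! ### Adding an affine function of the moment -/

section AffineMoment

variable {Y : Type*} [MeasurableSpace Y] [MetricSpace Y] {r s : ℝ} {y₀ : Y}

/-- The real-valued version of `momentBound`, with a coefficient of arbitrary sign. -/
def affineMoment (r : ℝ) (y₀ : Y) (s : ℝ) (p : Measure Y) : ℝ :=
  s * (1 + (rMoment r y₀ p).toReal)

theorem coe_momentBound {c : ℝ≥0} {p : Measure Y} (hp : rMoment r y₀ p < ⊤) :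
    (momentBound r y₀ c p : EReal) = affineMoment r y₀ c p := by
  rw [← EReal.coe_ennreal_toReal (momentBound_ne_top hp), momentBound, affineMoment,
    ENNReal.toReal_mul, ENNReal.toReal_add ENNReal.one_ne_top hp.ne, ENNReal.coe_toReal,
    ENNReal.toReal_one]

theorem affineMoment_neg (r : ℝ) (y₀ : Y) (s : ℝ) (p : Measure Y) :
    affineMoment r y₀ (-s) p = -affineMoment r y₀ s p :=
  neg_mul _ _

theorem rMoment_smul_add_smul (r : ℝ) (y₀ : Y) (a b : ℝ≥0∞) (p q : Measure Y) :
    rMoment r y₀ (a • p + b • q) = a * rMoment r y₀ p + b * rMoment r y₀ q := by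
  simp only [rMoment, lintegral_add_measure, lintegral_smul_measure, smul_eq_mul]

theorem affineMoment_smul_add_smul {a b : ℝ≥0} (hab : a + b = 1) {p q : Measure Y}
    (hp : rMoment r y₀ p < ⊤) (hq : rMoment r y₀ q < ⊤) :
    affineMoment r y₀ s ((a : ℝ≥0∞) • p + (b : ℝ≥0∞) • q) =
      a * affineMoment r y₀ s p + b * affineMoment r y₀ s q := by
  have hab' : (a + b : ℝ) = 1 := mod_cast hab
  rw [affineMoment, rMoment_smul_add_smul, ENNReal.toReal_add
    (ENNReal.mul_ne_top ENNReal.coe_ne_top hp.ne) (ENNReal.mul_ne_top ENNReal.coe_ne_top hq.ne),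
    ENNReal.toReal_mul, ENNReal.toReal_mul, ENNReal.coe_toReal, ENNReal.coe_toReal]
  simp only [affineMoment]
  linear_combination -s * hab'

theorem isProbabilityMeasure_smul_add_smul {T : Type*} [MeasurableSpace T] {a b : ℝ≥0}
    (hab : a + b = 1) (p q : Measure T) [IsProbabilityMeasure p] [IsProbabilityMeasure q] :
    IsProbabilityMeasure ((a : ℝ≥0∞) • p + (b : ℝ≥0∞) • q) := by
  constructor
  rw [Measure.add_apply, Measure.smul_apply, Measure.smul_apply, measure_univ, measure_univ,
    smul_eq_mul, smul_eq_mul, mul_one, mul_one, ← ENNReal.coe_add, hab, ENNReal.coe_one]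

theorem smul_add_smul_mem_Pr (hr : 0 ≤ r) {a b : ℝ≥0} (hab : a + b = 1) {p q : Measure Y}
    (hp : p ∈ Pr r y₀) (hq : q ∈ Pr r y₀) :
    (a : ℝ≥0∞) • p + (b : ℝ≥0∞) • q ∈ Pr r y₀ := by
  rw [mem_Pr_iff hr] at hp hq ⊢
  obtain ⟨hp₁, hp⟩ := hp
  obtain ⟨hq₁, hq⟩ := hq
  refine ⟨isProbabilityMeasure_smul_add_smul hab p q, ?_⟩
  rw [rMoment_smul_add_smul]
  exact ENNReal.add_lt_top.2 ⟨ENNReal.mul_lt_top ENNReal.coe_lt_top hp,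
    ENNReal.mul_lt_top ENNReal.coe_lt_top hq⟩

theorem EConvexOn.add_affineMoment (hr : 0 ≤ r) {F G : Measure Y → EReal}
    (hF : EConvexOn (Pr r y₀) F)
    (hG : ∀ p ∈ Pr r y₀, G p = F p + (affineMoment r y₀ s p : EReal)) :
    EConvexOn (Pr r y₀) G := by
  intro p hp q hq t ht
  have hsum : t + (1 - t) = 1 := add_tsub_cancel_of_le ht
  have hdistrib (a : ℝ≥0) (b c : EReal) : ((a : ℝ) : EReal) * (b + c) = (a : ℝ) * b + (a : ℝ) * c :=
    EReal.left_distrib_of_nonneg_of_ne_top (EReal.coe_nonneg.2 a.2) (EReal.coe_ne_top _) b c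
  rw [hG _ (smul_add_smul_mem_Pr hr hsum hp hq), hG p hp, hG q hq,
    affineMoment_smul_add_smul hsum ((mem_Pr_iff hr).1 hp).2 ((mem_Pr_iff hr).1 hq).2,
    hdistrib, hdistrib, add_add_add_comm, EReal.coe_add, EReal.coe_mul, EReal.coe_mul]
  exact add_le_add_left (hF p hp q hq t ht) _

variable [BorelSpace Y] [SecondCountableTopology Y]

theorem tendsto_affineMoment (hr : 1 ≤ r) (s : ℝ) {p : Measure Y} {ps : ℕ → Measure Y}
    (hp : rMoment r y₀ p < ⊤) (h : WrTendsto r ps p) :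
    Tendsto (fun n ↦ affineMoment r y₀ s (ps n)) atTop (𝓝 (affineMoment r y₀ s p)) :=
  (((ENNReal.tendsto_toReal hp.ne).comp
    (tendsto_rMoment_of_WrTendsto hr y₀ h hp.ne)).const_add 1).const_mul s

theorem LscWr1.add_affineMoment (hr : 1 ≤ r) {F G : Measure Y → EReal} (hF : LscWr1 r y₀ F)
    (hG : ∀ p ∈ Pr r y₀, G p = F p + (affineMoment r y₀ s p : EReal)) : LscWr1 r y₀ G := by
  intro p ps hp hps h
  have hlim := EReal.tendsto_coe.2
    (tendsto_affineMoment hr s ((mem_Pr_iff (zero_le_one.trans hr)).1 hp).2 h)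
  simp only [hG p hp, hG _ (hps _)]
  calc F p + (affineMoment r y₀ s p : EReal)
    _ ≤ liminf (fun n ↦ F (ps n)) atTop +
        liminf (fun n ↦ (affineMoment r y₀ s (ps n) : EReal)) atTop :=
      hlim.liminf_eq ▸ add_le_add_left (hF p ps hp hps h) _
    _ ≤ liminf (fun n ↦ F (ps n) + (affineMoment r y₀ s (ps n) : EReal)) atTop :=
      EReal.le_liminf_add

end AffineMoment

/-! ### Convexity and semicontinuity of the relaxation -/

section RelaxationConvex

theorem relaxation_le_self {T : Type*} [MeasurableSpace T] {D : ProbabilityMeasure T → ℝ≥0∞}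
    (hD : Measurable D) (p : ProbabilityMeasure T) : relaxation D p ≤ D p := by
  let Q : ProbabilityMeasure (ProbabilityMeasure T) := ⟨Measure.dirac p, inferInstance⟩
  have hQ : probIntensity Q = p := by
    refine ProbabilityMeasure.toMeasure_injective (Measure.ext fun A hA ↦ ?_)
    exact (probIntensity_apply Q hA).trans (lintegral_dirac' p (measurable_toMeasure_apply hA))
  calc relaxation D p ≤ ∫⁻ q, D q ∂(Q : Measure (ProbabilityMeasure T)) :=
        iInf₂_le_of_le Q hQ le_rfl
    _ = D p := lintegral_dirac' p hD

/-- The convex combination `a p + b q` as a probability measure. -/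
def mixture {T : Type*} [MeasurableSpace T] {a b : ℝ≥0} (hab : a + b = 1)
    (p q : ProbabilityMeasure T) : ProbabilityMeasure T :=
  ⟨(a : ℝ≥0∞) • (p : Measure T) + (b : ℝ≥0∞) • (q : Measure T),
    isProbabilityMeasure_smul_add_smul hab _ _⟩

theorem lintegral_mixture {T : Type*} [MeasurableSpace T] {a b : ℝ≥0} (hab : a + b = 1)
    (p q : ProbabilityMeasure T) (f : T → ℝ≥0∞) :
    ∫⁻ y, f y ∂(mixture hab p q : Measure T) =
      a * ∫⁻ y, f y ∂(p : Measure T) + b * ∫⁻ y, f y ∂(q : Measure T) := by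
  change ∫⁻ y, f y ∂((a : ℝ≥0∞) • (p : Measure T) + (b : ℝ≥0∞) • (q : Measure T)) = _
  simp only [lintegral_add_measure, lintegral_smul_measure, smul_eq_mul]

theorem probIntensity_mixture {T : Type*} [MeasurableSpace T] {a b : ℝ≥0} (hab : a + b = 1)
    (P Q : ProbabilityMeasure (ProbabilityMeasure T)) :
    probIntensity (mixture hab P Q) = mixture hab (probIntensity P) (probIntensity Q) := by
  refine ProbabilityMeasure.toMeasure_injective (Measure.ext fun A hA ↦ ?_)
  rw [probIntensity_apply _ hA, lintegral_mixture, ← probIntensity_apply _ hA,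
    ← probIntensity_apply _ hA]
  rfl

theorem relaxation_mixture_le {T : Type*} [MeasurableSpace T] {a b : ℝ≥0} (hab : a + b = 1)
    (ha : a ≠ 0) (hb : b ≠ 0) (D : ProbabilityMeasure T → ℝ≥0∞) (p q : ProbabilityMeasure T) :
    relaxation D (mixture hab p q) ≤ a * relaxation D p + b * relaxation D q := by
  have ha' : (a : ℝ≥0∞) ≠ 0 := ENNReal.coe_ne_zero.2 ha
  have hb' : (b : ℝ≥0∞) ≠ 0 := ENNReal.coe_ne_zero.2 hb
  rw [relaxation.eq_1 D p, relaxation.eq_1 D q]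
  simp only [ENNReal.mul_iInf_of_ne ha' ENNReal.coe_ne_top,
    ENNReal.mul_iInf_of_ne hb' ENNReal.coe_ne_top, ENNReal.iInf_add, ENNReal.add_iInf]
  refine le_iInf₂ fun P hP ↦ le_iInf₂ fun Q hQ ↦ ?_
  rw [← lintegral_mixture hab]
  exact iInf₂_le_of_le _ (by rw [probIntensity_mixture, hP, hQ]) le_rfl

variable {Y : Type*} [MeasurableSpace Y] [MetricSpace Y] {r : ℝ} {y₀ : Y}

theorem EConvexOn_of_eq_relaxation (hr : 0 ≤ r) {D : ProbabilityMeasure Y → ℝ≥0∞}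
    {G : Measure Y → EReal} (hG : ∀ p : ProbabilityMeasure Y, rMoment r y₀ (p : Measure Y) < ⊤ →
      G p = relaxation D p) : EConvexOn (Pr r y₀) G := by
  intro p hp q hq t ht
  rcases eq_or_ne t 0 with rfl | ht₀
  · simp
  rcases ht.eq_or_lt with rfl | ht₁
  · simp
  have hsum : t + (1 - t) = 1 := add_tsub_cancel_of_le ht
  have hmix := ((mem_Pr_iff hr).1 (smul_add_smul_mem_Pr hr hsum hp hq)).2
  obtain ⟨hp₁, hp⟩ := (mem_Pr_iff hr).1 hp
  obtain ⟨hq₁, hq⟩ := (mem_Pr_iff hr).1 hq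
  have hle := relaxation_mixture_le hsum ht₀ (tsub_pos_of_lt ht₁).ne' D ⟨p, hp₁⟩ ⟨q, hq₁⟩
  rw [← EReal.coe_ennreal_le_coe_ennreal_iff, EReal.coe_ennreal_add, EReal.coe_ennreal_mul,
    EReal.coe_ennreal_mul, ← hG (mixture hsum ⟨p, hp₁⟩ ⟨q, hq₁⟩) hmix, ← hG ⟨p, hp₁⟩ hp,
    ← hG ⟨q, hq₁⟩ hq] at hle
  exact hle

theorem lscWr1_iff_WrLowerSemicontinuous (hr : 0 ≤ r) {D : ProbabilityMeasure Y → ℝ≥0∞}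
    {G : Measure Y → EReal} (hG : ∀ p : ProbabilityMeasure Y, rMoment r y₀ (p : Measure Y) < ⊤ →
      G p = D p) : LscWr1 r y₀ G ↔ WrLowerSemicontinuous r y₀ D := by
  have hcoe (u : ℕ → ℝ≥0∞) : ((liminf u atTop : ℝ≥0∞) : EReal) =
      liminf (fun n ↦ (u n : EReal)) atTop :=
    Monotone.map_liminf_of_continuousAt (f := fun a : ℝ≥0∞ ↦ (a : EReal))
      (fun _ _ h ↦ EReal.coe_ennreal_le_coe_ennreal_iff.2 h) u
      continuous_coe_ennreal_ereal.continuousAt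
  have hiff {p : ProbabilityMeasure Y} {ps : ℕ → ProbabilityMeasure Y}
      (hp : rMoment r y₀ (p : Measure Y) < ⊤) (hps : ∀ n, rMoment r y₀ (ps n : Measure Y) < ⊤) :
      G p ≤ liminf (fun n ↦ G (ps n)) atTop ↔ D p ≤ liminf (fun n ↦ D (ps n)) atTop := by
    simp only [hG p hp, hG _ (hps _), ← hcoe, EReal.coe_ennreal_le_coe_ennreal_iff]
  constructor
  · intro h p ps hp hps hlim
    exact (hiff hp hps).1 (h p (fun n ↦ ps n) ((mem_Pr_iff hr).2 ⟨inferInstance, hp⟩)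
      (fun n ↦ (mem_Pr_iff hr).2 ⟨inferInstance, hps n⟩) hlim)
  · intro h p ps hp hps hlim
    obtain ⟨hp₁, hp⟩ := (mem_Pr_iff hr).1 hp
    choose hps₁ hps using fun n ↦ (mem_Pr_iff hr).1 (hps n)
    exact (hiff (p := ⟨p, hp₁⟩) (ps := fun n ↦ ⟨ps n, hps₁ n⟩) hp hps).2 (h _ _ hp hps hlim)

end RelaxationConvex

/-! ### Comparison with the convex envelope -/

section Envelope

variable {Y : Type*} [MeasurableSpace Y] [MetricSpace Y] [BorelSpace Y] {r : ℝ} {y₀ : Y}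
  {c : ℝ≥0} {X : Type*} [MeasurableSpace X] {C : X × Measure Y → EReal} {x : X}

theorem tildeC_add_affineMoment (hr : 0 < r) (hC : Measurable fun q ↦ C (x, q))
    (hlb : MomentMinorized r y₀ c fun q ↦ C (x, q)) {p : ProbabilityMeasure Y}
    (hp : rMoment r y₀ (p : Measure Y) < ⊤) :
    tildeC r y₀ C (x, p) + (affineMoment r y₀ c (p : Measure Y) : EReal) =
      relaxation (shiftedCost r y₀ c fun q ↦ C (x, q)) p := by
  rw [tildeC_eq_relaxation_sub hr hC hlb hp, coe_momentBound hp, sub_eq_add_neg, add_assoc,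
    ← EReal.coe_neg, ← EReal.coe_add, neg_add_cancel, EReal.coe_zero, add_zero]

theorem tildeC_le (hr : 0 < r) (hC : Measurable fun q ↦ C (x, q))
    (hlb : MomentMinorized r y₀ c fun q ↦ C (x, q)) {p : ProbabilityMeasure Y}
    (hp : rMoment r y₀ (p : Measure Y) < ⊤) : tildeC r y₀ C (x, p) ≤ C (x, p) := by
  rw [tildeC_eq_relaxation_sub hr hC hlb hp]
  refine le_of_le_of_eq ?_ (hlb.eq_shiftedCost_sub hr.le hp).symm
  exact EReal.sub_le_sub (EReal.coe_ennreal_le_coe_ennreal_iff.2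
    (relaxation_le_self (measurable_shiftedCost hC) p)) le_rfl

variable [SecondCountableTopology Y]

theorem cvxEnvWr_le_tildeC (hr : 1 ≤ r) (hC : Measurable fun q ↦ C (x, q))
    (hlb : MomentMinorized r y₀ c fun q ↦ C (x, q)) {p : ProbabilityMeasure Y}
    (hp : rMoment r y₀ (p : Measure Y) < ⊤) :
    cvxEnvWr r y₀ (fun q ↦ C (x, q)) p ≤ tildeC r y₀ C (x, p) := by
  have hr₀ : 0 < r := zero_lt_one.trans_le hr
  have hD := measurable_shiftedCost (r := r) (y₀ := y₀) (c := c) hC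
  rw [tildeC_eq_iInf_probIntensity hr₀ C x hp]
  refine iSup₂_le fun G ⟨hlsc, hconv, hGC⟩ ↦ le_iInf₂ fun Q hQ ↦ ?_
  subst hQ
  have hjensen := le_lintegral_of_EConvexOn hr
    (hlsc.add_affineMoment hr (s := c) fun _ _ ↦ rfl)
    (hconv.add_affineMoment hr₀.le (s := c) fun _ _ ↦ rfl) hD (fun q hq ↦ ?_) hp
  · rw [eInt_eq_lintegral_sub_momentBound hp hD.aemeasurable
      fun q hq ↦ hlb.eq_shiftedCost_sub hr₀.le hq, coe_momentBound hp]
    exact (EReal.le_sub_iff_add_le (.inl (EReal.coe_ne_bot _)) (.inl (EReal.coe_ne_top _))).2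
      hjensen
  · rw [hlb.coe_shiftedCost hr₀.le hq, coe_momentBound hq]
    exact add_le_add_left (hGC q ((mem_Pr_iff hr₀.le).2 ⟨inferInstance, hq⟩)) _

theorem tildeC_le_cvxEnvWr [CompleteSpace Y] (hr : 1 ≤ r) (hC : Measurable fun q ↦ C (x, q))
    (hlb : MomentMinorized r y₀ c fun q ↦ C (x, q)) (hlsc : LscWr1 r y₀ fun q ↦ C (x, q))
    (p : Measure Y) : tildeC r y₀ C (x, p) ≤ cvxEnvWr r y₀ (fun q ↦ C (x, q)) p := by
  have hr₀ : 0 < r := zero_lt_one.trans_le hr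
  let F (q : Measure Y) : EReal := C (x, q) + (affineMoment r y₀ c q : EReal)
  have hF (q : ProbabilityMeasure Y) (hq : rMoment r y₀ (q : Measure Y) < ⊤) :
      F q = shiftedCost r y₀ c (fun q ↦ C (x, q)) q := by
    simp only [F, hlb.coe_shiftedCost hr₀.le hq, coe_momentBound hq]
  let G (q : Measure Y) : EReal := tildeC r y₀ C (x, q) + (affineMoment r y₀ c q : EReal)
  have hG (q : ProbabilityMeasure Y) (hq : rMoment r y₀ (q : Measure Y) < ⊤) :
      G q = relaxation (shiftedCost r y₀ c fun q ↦ C (x, q)) q :=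
    tildeC_add_affineMoment hr₀ hC hlb hq
  have hcancel (q : Measure Y) (_ : q ∈ Pr r y₀) : tildeC r y₀ C (x, q) =
      G q + (affineMoment r y₀ (-c) q : EReal) := by
    rw [affineMoment_neg, add_assoc, ← EReal.coe_add, add_neg_cancel, EReal.coe_zero, add_zero]
  have hD : WrLowerSemicontinuous r y₀ (shiftedCost r y₀ c fun q ↦ C (x, q)) :=
    (lscWr1_iff_WrLowerSemicontinuous hr₀.le hF).1
      (hlsc.add_affineMoment hr fun _ _ ↦ rfl)
  have htilde := (lscWr1_iff_WrLowerSemicontinuous hr₀.le hG).2 (hD.relaxation hr)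
  refine le_iSup₂_of_le (fun q ↦ tildeC r y₀ C (x, q)) ⟨?_, ?_, fun q hq ↦ ?_⟩ le_rfl
  · exact htilde.add_affineMoment hr hcancel
  · exact (EConvexOn_of_eq_relaxation hr₀.le hG).add_affineMoment hr₀.le hcancel
  · obtain ⟨hq₁, hq⟩ := (mem_Pr_iff hr₀.le).1 hq
    exact tildeC_le hr₀ hC hlb (p := ⟨q, hq₁⟩) hq

end Envelope

theorem exists_momentMinorized {Y : Type*} [MeasurableSpace Y] [MetricSpace Y] [BorelSpace Y]
    {r : ℝ} (hr : 0 < r) {y₀ : Y} {f : Measure Y → EReal} {K : ℝ}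
    (hf : ∀ p ∈ Pr r y₀,
      ((-(K * (1 + (Wr r p (Measure.dirac y₀) ^ r).toReal)) : ℝ) : EReal) ≤ f p) :
    ∃ c, MomentMinorized r y₀ c f := by
  refine ⟨K.toNNReal, fun p hp ↦ le_trans ?_ (hf p hp)⟩
  obtain ⟨hp₁, hp⟩ := (mem_Pr_iff hr.le).1 hp
  rw [coe_momentBound hp, ← EReal.coe_neg, EReal.coe_le_coe_iff, neg_le_neg_iff,
    Wr_dirac_rpow hr]
  exact mul_le_mul_of_nonneg_right (Real.le_coe_toNNReal K) (by positivity)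

theorem mul_one_add_add_le {K a b : ℝ} (ha : 0 ≤ a) (hb : 0 ≤ b) :
    K * (1 + a + b) ≤ |K| * (1 + a) * (1 + b) :=
  calc K * (1 + a + b) ≤ |K| * (1 + a + b) :=
        mul_le_mul_of_nonneg_right (le_abs_self K) (by positivity)
    _ ≤ |K| * (1 + a) * (1 + b) := by
        rw [mul_assoc]
        exact mul_le_mul_of_nonneg_left (by nlinarith [mul_nonneg ha hb]) (abs_nonneg K)

end WOT

theorem statement7_general {X Y : Type*} [MeasurableSpace X]
    [MeasurableSpace Y] [MetricSpace Y] [CompleteSpace Y] [SecondCountableTopology Y]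
    [BorelSpace Y] (r : ℝ) (hr : 1 ≤ r) (y₀ : Y)
    (C : X × Measure Y → EReal) (hC : ∀ x, Measurable fun p ↦ C (x, p))
    (hlb : ∀ x, ∃ K : ℝ, ∀ p ∈ Pr r y₀,
      ((-(K * (1 + (Wr r p (Measure.dirac y₀) ^ r).toReal)) : ℝ) : EReal) ≤ C (x, p)) :
    (∀ x, ∀ p ∈ Pr r y₀, ∀ Q ∈ PrP r y₀, intensity Q = p →
      cvxEnvWr r y₀ (fun q ↦ C (x, q)) p ≤ tildeC r y₀ C (x, p) ∧
      tildeC r y₀ C (x, p) ≤ eInt (fun q ↦ tildeC r y₀ C (x, q)) Q) ∧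
    (∀ x, LscWr1 r y₀ (fun p ↦ C (x, p)) → ∀ p ∈ Pr r y₀,
      cvxEnvWr r y₀ (fun q ↦ C (x, q)) p = tildeC r y₀ C (x, p)) := by
  have hr₀ : 0 < r := zero_lt_one.trans_le hr
  have hminor (x : X) : ∃ c, MomentMinorized r y₀ c fun p ↦ C (x, p) :=
    (hlb x).elim fun _ hK ↦ exists_momentMinorized hr₀ hK
  have henvelope (x : X) (p) (hp : p ∈ Pr r y₀) :
      cvxEnvWr r y₀ (fun q ↦ C (x, q)) p ≤ tildeC r y₀ C (x, p) := by
    obtain ⟨c, hc⟩ := hminor x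
    obtain ⟨hp₁, hp⟩ := (mem_Pr_iff hr₀.le).1 hp
    exact cvxEnvWr_le_tildeC hr (hC x) hc (p := ⟨p, hp₁⟩) hp
  refine ⟨fun x p hp Q hQ hQp ↦ ⟨henvelope x p hp, ?_⟩, fun x hlsc p hp ↦ ?_⟩
  · obtain ⟨c, hc⟩ := hminor x
    exact hQp ▸ tildeC_le_eInt_tildeC hr₀ (hC x) hc hQ
  · obtain ⟨c, hc⟩ := hminor x
    exact (henvelope x p hp).antisymm (tildeC_le_cvxEnvWr hr (hC x) hc hlsc p)

/-- comparison of the convex envelope and the convexified cost `C̃`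
(Lemma `lem:CastleqtildeC`). -/
theorem statement7 {X Y : Type*}
    [MeasurableSpace X] [MetricSpace X] [CompleteSpace X] [SecondCountableTopology X]
    [BorelSpace X]
    [MeasurableSpace Y] [MetricSpace Y] [CompleteSpace Y] [SecondCountableTopology Y]
    [BorelSpace Y]
    (r : ℝ) (hr : 1 ≤ r) (x₀ : X) (y₀ : Y)
    (C : X × Measure Y → EReal) (hC : Measurable C) (K : ℝ)
    (hlb : ∀ x, ∀ p ∈ Pr r y₀,
      ((-(K * (1 + dist x x₀ ^ r + (Wr r p (Measure.dirac y₀) ^ r).toReal)) : ℝ) : EReal)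
        ≤ C (x, p)) :
    (∀ x, ∀ p ∈ Pr r y₀, ∀ Q ∈ PrP r y₀, intensity Q = p →
      cvxEnvWr r y₀ (fun q => C (x, q)) p ≤ tildeC r y₀ C (x, p) ∧
      tildeC r y₀ C (x, p) ≤ eInt (fun q => tildeC r y₀ C (x, q)) Q) ∧
    (∀ x, LscWr1 r y₀ (fun p => C (x, p)) → ∀ p ∈ Pr r y₀,
      cvxEnvWr r y₀ (fun q => C (x, q)) p = tildeC r y₀ C (x, p)) :=
  statement7_general r hr y₀ C (fun _ ↦ hC.comp measurable_prodMk_left) fun x ↦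
    ⟨|K| * (1 + dist x x₀ ^ r), fun p hp ↦ le_trans (EReal.coe_le_coe_iff.2 (neg_le_neg
      (WOT.mul_one_add_add_le (by positivity) ENNReal.toReal_nonneg))) (hlb x p hp)⟩
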